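/- arXiv:0909.4250 — 2 statements merged into one kernel-verified Lean document; each statement's English description precedes it below -/
import Mathlib

section
/- Let (X, σ_X) be a one-sided subshift over a finite alphabet, p ∈ ℕ, φ ∈ D_w(X, p), and let Φ = (log φ_n)_{n=1}^∞ ∈ C_sa(X, σ_X) be generated by φ, i.e. φ_n(x) = φ(x_1…x_n). Then Φ has a unique equilibrium state μ. The measure μ is ergodic and satisfies the Gibbs property: there is a constant c > 0 such that c^{-1} e^{−nP} φ(I) ≤ μ(I) ≤ c e^{−nP} φ(I) for all I ∈ L_n(X) and n ∈ ℕ, where P = lim_{n→∞} (1/n) log Σ_{J ∈ L_n(X)} φ(J). Furthermore, Σ_{I ∈ L_n(X)} μ(I) log φ(I) = n Φ_*(μ) + O(1) and Σ_{I ∈ L_n(X)} μ(I) log μ(I) = −n h_μ(σ_X) + O(1) as n → ∞. -/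
open MeasureTheory Filter Topology
open scoped Classical ENNReal NNReal

noncomputable section

/-- The left shift on one-sided sequences. -/
def shiftMap {A : Type} : (ℕ → A) → (ℕ → A) := fun x n => x (n + 1)

/-- The cylinder set of a finite word. -/
def cyl {A : Type} (I : List A) : Set (ℕ → A) :=
  {x | ∀ i : Fin I.length, x i = I.get i}

/-- Membership of a word in the language of `X`. -/
def Lang {A : Type} (X : Set (ℕ → A)) (I : List A) : Prop :=
  (cyl I ∩ X).Nonempty

/-- `X` is a (nonempty) one-sided subshift. -/
def IsSubshift {A : Type} [TopologicalSpace A] (X : Set (ℕ → A)) : Prop :=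
  X.Nonempty ∧ IsCompact X ∧ shiftMap '' X ⊆ X

/-- weak `p`-specification -/
def WeakSpecification {A : Type} (X : Set (ℕ → A)) (p : ℕ) : Prop :=
  ∀ I J : List A, Lang X I → Lang X J →
    ∃ K : List A, K.length ≤ p ∧ Lang X (I ++ K ++ J)

/-- `p`-specification -/
def Specification {A : Type} (X : Set (ℕ → A)) (p : ℕ) : Prop :=
  ∀ I J : List A, Lang X I → Lang X J →
    ∃ K : List A, K.length = p ∧ Lang X (I ++ K ++ J)

/-- invariant probability measures supported on `X` (predicate on plain measures) -/
def InvOn {A : Type} [MeasurableSpace A] (X : Set (ℕ → A)) (μ : Measure (ℕ → A)) : Prop :=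
  IsProbabilityMeasure μ ∧ μ.map shiftMap = μ ∧ μ X = 1

/-- the set of shift-invariant probability measures on `X` -/
def MInv {A : Type} [MeasurableSpace A] (X : Set (ℕ → A)) :
    Set (ProbabilityMeasure (ℕ → A)) :=
  {μ | (μ : Measure (ℕ → A)).map shiftMap = (μ : Measure (ℕ → A)) ∧
    (μ : Measure (ℕ → A)) X = 1}

/-- measure of a word: `μ([I] ∩ X)` -/
def mw {A : Type} [MeasurableSpace A] (X : Set (ℕ → A)) (μ : Measure (ℕ → A))
    (I : List A) : ℝ :=
  (μ (cyl I ∩ X)).toReal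

/-- the initial word of length `n` of a sequence -/
def wordOf {A : Type} (x : ℕ → A) (n : ℕ) : List A := List.ofFn (fun i : Fin n => x i)

/-- `n`-block entropy -/
def Hblock {A : Type} [Fintype A] [MeasurableSpace A] (X : Set (ℕ → A))
    (μ : Measure (ℕ → A)) (n : ℕ) : ℝ :=
  -∑ w : Fin n → A, mw X μ (List.ofFn w) * Real.log (mw X μ (List.ofFn w))

/-- measure-theoretic entropy (the limit exists for invariant measures; `liminf` realizes it) -/
def ent {A : Type} [Fintype A] [MeasurableSpace A] (X : Set (ℕ → A))
    (μ : Measure (ℕ → A)) : ℝ :=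
  liminf (fun n : ℕ => Hblock X μ n / n) atTop

/-- extended logarithm: `log t`, with value `⊥` for `t ≤ 0` -/
def elog (t : ℝ) : EReal := if t ≤ 0 then ⊥ else ((Real.log t : ℝ) : EReal)

/-- the integral `∫ log g dμ`, valued in `ℝ ∪ {−∞}` -/
def intlog {Ω : Type*} [MeasurableSpace Ω] (μ : Measure Ω) (g : Ω → ℝ) : EReal :=
  ((∫⁻ x, ENNReal.ofReal (Real.log (g x)) ∂μ : ℝ≥0∞) : EReal) -
    ((∫⁻ x, (if g x ≤ 0 then (⊤ : ℝ≥0∞) else ENNReal.ofReal (-Real.log (g x))) ∂μ : ℝ≥0∞) : EReal)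

/-- sub-additive potential `Φ = (log φ_n)_{n ≥ 1}` -/
def SubaddPot {A : Type} [TopologicalSpace A] (X : Set (ℕ → A))
    (φ : ℕ → (ℕ → A) → ℝ) : Prop :=
  (∀ n, 1 ≤ n → ContinuousOn (φ n) X) ∧
  (∀ n, 1 ≤ n → ∀ x ∈ X, 0 ≤ φ n x) ∧
  ∃ c > (0:ℝ), ∀ n m : ℕ, 1 ≤ n → 1 ≤ m → ∀ x ∈ X,
    φ (n + m) x ≤ c * φ n x * φ m (shiftMap^[n] x)

/-- `Φ_*(μ) = lim (1/n) ∫ log φ_n dμ` (realized as a `liminf` in `EReal`) -/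
def PhiStar {A : Type} [MeasurableSpace A] (μ : Measure (ℕ → A))
    (φ : ℕ → (ℕ → A) → ℝ) : EReal :=
  liminf (fun n : ℕ => (((n : ℝ)⁻¹ : ℝ) : EReal) * intlog μ (φ n)) atTop

/-- sub-multiplicative function on the language of `X` -/
def Submult {A : Type} (X : Set (ℕ → A)) (φ : List A → ℝ) : Prop :=
  (∀ I, Lang X I → 0 ≤ φ I) ∧ φ [] = 1 ∧
  ∃ c > (0:ℝ), ∀ I J : List A, Lang X (I ++ J) → φ (I ++ J) ≤ c⁻¹ * φ I * φ J

/-- the potential generated by a word function -/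
def genPot {A : Type} (φ : List A → ℝ) : ℕ → (ℕ → A) → ℝ := fun n x => φ (wordOf x n)

/-- the scaled potential `cΦ = (log φ_n^c)` -/
def scPot {Ω : Type*} (c : ℝ) (φ : ℕ → Ω → ℝ) : ℕ → Ω → ℝ := fun n x => φ n x ^ c

/-- the "pressure value" `Φ_*(μ) + h_μ` -/
def eqVal {A : Type} [Fintype A] [MeasurableSpace A] (X : Set (ℕ → A))
    (φ : ℕ → (ℕ → A) → ℝ) (μ : ProbabilityMeasure (ℕ → A)) : EReal :=
  PhiStar (μ : Measure (ℕ → A)) φ + ((ent X (μ : Measure (ℕ → A)) : ℝ) : EReal)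

/-- the set of equilibrium states of `Φ` -/
def EqSet {A : Type} [Fintype A] [MeasurableSpace A] (X : Set (ℕ → A))
    (φ : ℕ → (ℕ → A) → ℝ) : Set (ProbabilityMeasure (ℕ → A)) :=
  {μ | μ ∈ MInv X ∧ eqVal X φ μ = ⨆ η ∈ MInv X, eqVal X φ η}

/-- sequence map induced by a one-block map -/
def blockMap {A B : Type} (π : A → B) : (ℕ → A) → (ℕ → B) := fun x n => π (x n)

/-- pushforward of a probability measure under a one-block map -/
def pushM {A B : Type} [MeasurableSpace A] [MeasurableSpace B] (π : A → B)
    (μ : ProbabilityMeasure (ℕ → A)) : Measure (ℕ → B) :=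
  (μ : Measure (ℕ → A)).map (blockMap π)

/-- conditional equilibrium states of `Φ` over `ν` -/
def CondEqSet {A B : Type} [Fintype A] [MeasurableSpace A] [MeasurableSpace B]
    (X : Set (ℕ → A)) (π : A → B) (φ : ℕ → (ℕ → A) → ℝ) (ν : Measure (ℕ → B)) :
    Set (ProbabilityMeasure (ℕ → A)) :=
  {μ | μ ∈ MInv X ∧ pushM π μ = ν ∧
    eqVal X φ μ = ⨆ η ∈ {η | η ∈ MInv X ∧ pushM π η = ν}, eqVal X φ η}

/-- the projected word function `ψ(J) = Σ_{I : πI = J} φ(I)` -/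
def psiProj {A B : Type} [Fintype A] (X : Set (ℕ → A)) (π : A → B) (φ : List A → ℝ)
    (J : List B) : ℝ :=
  ∑ w : Fin J.length → A,
    if Lang X (List.ofFn w) ∧ List.map π (List.ofFn w) = J then φ (List.ofFn w) else 0

/-- `φ^{(2)}(J) = (Σ_{I : πI = J} φ(I)^{1/a₁})^{a₁}` -/
def phiTwo {A B : Type} [Fintype A] (X : Set (ℕ → A)) (π : A → B) (φ : List A → ℝ)
    (a₁ : ℝ) (J : List B) : ℝ :=
  (∑ w : Fin J.length → A,
    if Lang X (List.ofFn w) ∧ List.map π (List.ofFn w) = J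
    then φ (List.ofFn w) ^ a₁⁻¹ else 0) ^ a₁

/-- `a`-weighted pressure value for `k = 2` -/
def wVal2 {A B : Type} [Fintype A] [Fintype B] [MeasurableSpace A] [MeasurableSpace B]
    (X : Set (ℕ → A)) (Y : Set (ℕ → B)) (π : A → B) (φ : ℕ → (ℕ → A) → ℝ)
    (a₁ a₂ : ℝ) (μ : ProbabilityMeasure (ℕ → A)) : EReal :=
  PhiStar (μ : Measure (ℕ → A)) φ +
    ((a₁ * ent X (μ : Measure (ℕ → A)) + a₂ * ent Y (pushM π μ) : ℝ) : EReal)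

/-- the set of `a`-weighted equilibrium states, `k = 2` -/
def WEqSet2 {A B : Type} [Fintype A] [Fintype B] [MeasurableSpace A] [MeasurableSpace B]
    (X : Set (ℕ → A)) (Y : Set (ℕ → B)) (π : A → B) (φ : ℕ → (ℕ → A) → ℝ)
    (a₁ a₂ : ℝ) : Set (ProbabilityMeasure (ℕ → A)) :=
  {μ | μ ∈ MInv X ∧ wVal2 X Y π φ a₁ a₂ μ = ⨆ η ∈ MInv X, wVal2 X Y π φ a₁ a₂ η}

/-- convexity of a set of probability measures -/
def ConvexPM {Ω : Type*} [MeasurableSpace Ω] (S : Set (ProbabilityMeasure Ω)) : Prop :=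
  ∀ μ₁ ∈ S, ∀ μ₂ ∈ S, ∀ t : ℝ, 0 ≤ t → t ≤ 1 → ∀ μ : ProbabilityMeasure Ω,
    (μ : Measure Ω) = ENNReal.ofReal t • (μ₁ : Measure Ω) +
      ENNReal.ofReal (1 - t) • (μ₂ : Measure Ω) → μ ∈ S

/-- extreme points of a set of probability measures -/
def IsExtremePM {Ω : Type*} [MeasurableSpace Ω] (S : Set (ProbabilityMeasure Ω))
    (μ : ProbabilityMeasure Ω) : Prop :=
  μ ∈ S ∧ ∀ μ₁ ∈ S, ∀ μ₂ ∈ S, ∀ t : ℝ, 0 < t → t < 1 →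
    (μ : Measure Ω) = ENNReal.ofReal t • (μ₁ : Measure Ω) +
      ENNReal.ofReal (1 - t) • (μ₂ : Measure Ω) → μ₁ = μ₂

/-- the class `Ω_w(A*, p)` -/
def OmegaW {A : Type} [Fintype A] (p : ℕ) (f : List A → ℝ) : Prop :=
  (∀ I, 0 ≤ f I ∧ f I ≤ 1) ∧
  ∃ c > (0:ℝ),
    (∀ n : ℕ, ∑ w : Fin n → A, f (List.ofFn w) = 1) ∧
    (∀ I J : List A, ∃ K : List A, K.length ≤ p ∧ c * (f I * f J) ≤ f (I ++ K ++ J)) ∧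
    (∀ I : List A, ∃ i j : A, c * f I ≤ f (i :: I) ∧ c * f I ≤ f (I ++ [j]))

/-- the class `Ω(A*, p)` -/
def OmegaS {A : Type} [Fintype A] (p : ℕ) (f : List A → ℝ) : Prop :=
  (∀ I, 0 ≤ f I ∧ f I ≤ 1) ∧
  ∃ c > (0:ℝ),
    (∀ n : ℕ, ∑ w : Fin n → A, f (List.ofFn w) = 1) ∧
    (∀ I J : List A, ∃ K : List A, K.length = p ∧ c * (f I * f J) ≤ f (I ++ K ++ J))

/-- `f_{m,n}(I)` -/
def fmn {A : Type} [Fintype A] (f : List A → ℝ) (m n : ℕ) (I : List A) : ℝ :=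
  ∑ u : Fin m → A, ∑ v : Fin n → A, f (List.ofFn u ++ I ++ List.ofFn v)

/-- `f*(I) = sup_{m,n} f_{m,n}(I)` -/
def fstar {A : Type} [Fintype A] (f : List A → ℝ) (I : List A) : ℝ :=
  ⨆ m : ℕ, ⨆ n : ℕ, fmn f m n I

/-- the class `D_w(X, p)` -/
def Dw {A : Type} (X : Set (ℕ → A)) (p : ℕ) (φ : List A → ℝ) : Prop :=
  (∀ I, Lang X I → 0 ≤ φ I) ∧ (∃ I, Lang X I ∧ I ≠ [] ∧ 0 < φ I) ∧
  ∃ c : ℝ, 0 < c ∧ c ≤ 1 ∧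
    (∀ I J : List A, Lang X (I ++ J) → φ (I ++ J) ≤ c⁻¹ * φ I * φ J) ∧
    (∀ I J : List A, Lang X I → Lang X J →
      ∃ K : List A, K.length ≤ p ∧ Lang X (I ++ K ++ J) ∧
        c * (φ I * φ J) ≤ φ (I ++ K ++ J))

/-- the class `D(X, p)` -/
def Ds {A : Type} (X : Set (ℕ → A)) (p : ℕ) (φ : List A → ℝ) : Prop :=
  (∀ I, Lang X I → 0 ≤ φ I) ∧ (∃ I, Lang X I ∧ I ≠ [] ∧ 0 < φ I) ∧
  ∃ c : ℝ, 0 < c ∧ c ≤ 1 ∧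
    (∀ I J : List A, Lang X (I ++ J) → φ (I ++ J) ≤ c⁻¹ * φ I * φ J) ∧
    (∀ I J : List A, Lang X I → Lang X J →
      ∃ K : List A, K.length = p ∧ Lang X (I ++ K ++ J) ∧
        c * (φ I * φ J) ≤ φ (I ++ K ++ J))

end

noncomputable section

/-- iterated one-block maps along a chain of alphabets: `tauFrom π j i : B j → B (j+i)` -/
def tauFrom {B : ℕ → Type} (π : ∀ i, B i → B (i+1)) (j : ℕ) : (i : ℕ) → B j → B (j + i)
  | 0 => id
  | (i+1) => fun a => π (j + i) (tauFrom π j i a)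

/-- weighted pressure value along a chain starting at index `j`, with `k` weights `w 0, …, w (k-1)` -/
def wValGen {B : ℕ → Type} [∀ i, Fintype (B i)] [∀ i, MeasurableSpace (B i)]
    (π : ∀ i, B i → B (i+1)) (X : ∀ i, Set (ℕ → B i)) (j k : ℕ) (w : ℕ → ℝ)
    (φ : ℕ → (ℕ → B j) → ℝ) (μ : ProbabilityMeasure (ℕ → B j)) : EReal :=
  PhiStar (μ : Measure (ℕ → B j)) φ +
    ((∑ i ∈ Finset.range k, w i *
      ent (X (j + i)) ((μ : Measure (ℕ → B j)).map (blockMap (tauFrom π j i))) : ℝ) : EReal)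

/-- weighted equilibrium states along a chain -/
def wEqSetGen {B : ℕ → Type} [∀ i, Fintype (B i)] [∀ i, MeasurableSpace (B i)]
    (π : ∀ i, B i → B (i+1)) (X : ∀ i, Set (ℕ → B i)) (j k : ℕ) (w : ℕ → ℝ)
    (φ : ℕ → (ℕ → B j) → ℝ) : Set (ProbabilityMeasure (ℕ → B j)) :=
  {μ | μ ∈ MInv (X j) ∧
    wValGen π X j k w φ μ = ⨆ η ∈ MInv (X j), wValGen π X j k w φ η}

end

set_option linter.unusedSectionVars false
set_option linter.unusedVariables false
open scoped symmDiff

namespace Gb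

section words
variable {A : Type} [Fintype A]

/-- sum of a word function over all words of length `n` -/
noncomputable def S (n : ℕ) (g : List A → ℝ) : ℝ := ∑ w : Fin n → A, g (List.ofFn w)

lemma S_zero (g : List A → ℝ) : S 0 g = g [] := by simp [S]

lemma S_add (n m : ℕ) (g : List A → ℝ) :
    S (n + m) g = S n (fun u => S m (fun v => g (u ++ v))) := by
  unfold S
  rw [← (Fin.appendEquiv n m).sum_comp, Fintype.sum_prod_type]
  refine Finset.sum_congr rfl fun u _ => Finset.sum_congr rfl fun v _ => ?_
  simp [Fin.appendEquiv, List.ofFn_fin_append]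

lemma S_mono {n : ℕ} {f g : List A → ℝ} (h : ∀ w, w.length = n → f w ≤ g w) : S n f ≤ S n g :=
  Finset.sum_le_sum fun w _ => h _ (by simp)

lemma S_congr {n : ℕ} {f g : List A → ℝ} (h : ∀ w, w.length = n → f w = g w) : S n f = S n g :=
  Finset.sum_congr rfl fun w _ => h _ (by simp)

lemma S_nonneg {n : ℕ} {f : List A → ℝ} (h : ∀ w, 0 ≤ f w) : 0 ≤ S n f :=
  Finset.sum_nonneg fun w _ => h _

lemma S_mul (n : ℕ) (a : ℝ) (f : List A → ℝ) : S n (fun w => a * f w) = a * S n f := by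
  simp [S, Finset.mul_sum]

lemma S_mul' (n : ℕ) (a : ℝ) (f : List A → ℝ) : S n (fun w => f w * a) = S n f * a := by
  simp [S, Finset.sum_mul]

lemma S_div (n : ℕ) (a : ℝ) (f : List A → ℝ) : S n (fun w => f w / a) = S n f / a := by
  simp [S, Finset.sum_div]

lemma S_plus (n : ℕ) (f g : List A → ℝ) : S n (fun w => f w + g w) = S n f + S n g := by
  simp [S, Finset.sum_add_distrib]

lemma S_minus (n : ℕ) (f g : List A → ℝ) : S n (fun w => f w - g w) = S n f - S n g := by
  simp [S, Finset.sum_sub_distrib]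

lemma S_sum {ι : Type*} (s : Finset ι) (n : ℕ) (f : ι → List A → ℝ) :
    S n (fun w => ∑ i ∈ s, f i w) = ∑ i ∈ s, S n (f i) := by
  simp only [S]; rw [Finset.sum_comm]

lemma S_comm (n m : ℕ) (f : List A → List A → ℝ) :
    S n (fun u => S m (fun v => f u v)) = S m (fun v => S n (fun u => f u v)) := by
  simp only [S]; rw [Finset.sum_comm]

lemma le_S {f : List A → ℝ} (h : ∀ w, 0 ≤ f w) (w : List A) : f w ≤ S w.length f := by
  have := Finset.single_le_sum (f := fun u : Fin w.length → A => f (List.ofFn u))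
    (fun _ _ => h _) (Finset.mem_univ (fun i => w.get i))
  simpa [S] using this

end words

/-- quasi-additive sequences are linear up to a bounded error -/
lemma quasi_additive (a : ℕ → ℝ) (C : ℝ) (h : ∀ n m, |a (n + m) - a n - a m| ≤ C) :
    ∃ L, Tendsto (fun n : ℕ => a n / n) atTop (𝓝 L) ∧ ∀ n : ℕ, |a n - n * L| ≤ C := by
  have hC : 0 ≤ C := (abs_nonneg _).trans (h 0 0)
  have hsub : Subadditive (fun n => a n + C) := by
    intro m n; have := abs_le.1 (h m n); simp only; linarith
  have hsub' : Subadditive (fun n => -a n + C) := by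
    intro m n; have := abs_le.1 (h m n); simp only; linarith
  have bd : ∀ b : ℕ → ℝ, (∀ n m, |b (n + m) - b n - b m| ≤ C) → ∀ n : ℕ, |b n| ≤ (n + 1) * (|b 1| + C) := by
    intro b hb n
    induction n with
    | zero => have := abs_le.1 (hb 0 0); simp at this
              rw [abs_le]; push_cast; constructor <;> nlinarith [abs_nonneg (b 1)]
    | succ k ih =>
      have h1 := abs_le.1 (hb k 1)
      have h2 := abs_le.1 ih
      have h3 := abs_le.1 (le_refl |b 1|)
      rw [abs_le]; push_cast; constructor <;> nlinarith
  have lower : ∀ b : ℕ → ℝ, (∀ n m, |b (n + m) - b n - b m| ≤ C) →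
      BddBelow (Set.range fun n : ℕ => (b n + C) / n) := by
    intro b hb
    refine ⟨-(2 * (|b 1| + C)), ?_⟩
    rintro _ ⟨n, rfl⟩
    have hb1 := abs_nonneg (b 1)
    rcases Nat.eq_zero_or_pos n with rfl | hn
    · simp; linarith
    · have hn' : (1:ℝ) ≤ n := by exact_mod_cast hn
      simp only
      rw [le_div_iff₀ (by linarith)]
      have := abs_le.1 (bd b hb n)
      nlinarith
  have l1 := lower a h
  have l2 := lower (fun n => -a n) (fun n m => by
    rw [← abs_neg]; convert h n m using 2; ring)
  have t1 := hsub.tendsto_lim l1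
  have t2 := hsub'.tendsto_lim l2
  have t0 : Tendsto (fun n : ℕ => C / (n:ℝ)) atTop (𝓝 0) :=
    tendsto_const_nhds.div_atTop tendsto_natCast_atTop_atTop
  have t3 : Tendsto (fun n : ℕ => a n / n) atTop (𝓝 hsub.lim) := by
    have := t1.sub t0
    simp only [sub_zero] at this
    refine this.congr fun n => ?_
    ring
  have t4 : Tendsto (fun n : ℕ => a n / n) atTop (𝓝 (-hsub'.lim)) := by
    have := (t2.sub t0).neg
    simp only [sub_zero] at this
    refine this.congr fun n => ?_
    ring
  have heq := tendsto_nhds_unique t3 t4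
  refine ⟨hsub.lim, t3, fun n => ?_⟩
  rcases Nat.eq_zero_or_pos n with rfl | hn
  · have := h 0 0; simp at this; simpa using this
  · have hn' : (0:ℝ) < n := by exact_mod_cast hn
    have e1 := hsub.lim_le_div l1 hn.ne'
    have e2 := hsub'.lim_le_div l2 hn.ne'
    rw [le_div_iff₀ hn'] at e1 e2
    rw [abs_le]
    have e3 : hsub'.lim = - hsub.lim := by linarith
    rw [e3] at e2
    constructor <;> nlinarith

section comb
variable {A : Type} [Fintype A]

/-- the abstract version of `D_w` on the full shift -/
structure Adm (p : ℕ) (D : ℝ) (ψ : List A → ℝ) : Prop where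
  one_le : 1 ≤ D
  nonneg : ∀ I, 0 ≤ ψ I
  pos : ∃ I, I ≠ [] ∧ 0 < ψ I
  sub : ∀ I J, ψ (I ++ J) ≤ D * ψ I * ψ J
  sup : ∀ I J, ∃ K : List A, K.length ≤ p ∧ ψ I * ψ J ≤ D * ψ (I ++ K ++ J)

variable {p : ℕ} {D : ℝ} {ψ : List A → ℝ}

namespace Adm

lemma pos_left (h : Adm p D ψ) {I J : List A} (hp : 0 < ψ (I ++ J)) : 0 < ψ I := by
  by_contra hc
  have : ψ I = 0 := le_antisymm (not_lt.1 hc) (h.nonneg _)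
  have := h.sub I J
  simp_all
  linarith

lemma exists_pos (h : Adm p D ψ) (n : ℕ) : ∃ I, n ≤ I.length ∧ 0 < ψ I := by
  induction n with
  | zero => obtain ⟨I, _, h2⟩ := h.pos; exact ⟨I, by simp, h2⟩
  | succ n ih =>
    obtain ⟨I, h1, h2⟩ := h.pos
    obtain ⟨J, h3, h4⟩ := ih
    obtain ⟨K, _, hK⟩ := h.sup I J
    refine ⟨I ++ K ++ J, ?_, ?_⟩
    · have := List.length_pos_iff.2 h1
      simp; omega
    · have : 0 < ψ I * ψ J := mul_pos h2 h4
      by_contra hc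
      have h0 := h.one_le
      nlinarith [not_lt.1 hc]

lemma Z_pos (h : Adm p D ψ) (n : ℕ) : 0 < S n ψ := by
  obtain ⟨I, h1, h2⟩ := h.exists_pos n
  rw [← List.take_append_drop n I] at h2
  have := h.pos_left h2
  have h3 := le_S h.nonneg (I.take n)
  rw [List.length_take, min_eq_left h1] at h3
  linarith

lemma D_pos (h : Adm p D ψ) : 0 < D := by linarith [h.one_le]

lemma upR (h : Adm p D ψ) (Q : List A) (b : ℕ) : S b (fun v => ψ (Q ++ v)) ≤ D * ψ Q * S b ψ := by
  rw [← S_mul]; exact S_mono fun w _ => h.sub _ _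

lemma upL (h : Adm p D ψ) (Q : List A) (b : ℕ) : S b (fun v => ψ (v ++ Q)) ≤ D * S b ψ * ψ Q := by
  rw [← S_mul, ← S_mul']; exact S_mono fun w _ => h.sub _ _

lemma sup_sum (h : Adm p D ψ) (I J : List A) :
    ψ I * ψ J ≤ D * ∑ k ∈ Finset.range (p + 1), S k (fun K => ψ (I ++ K ++ J)) := by
  obtain ⟨K, hK, h1⟩ := h.sup I J
  refine h1.trans (mul_le_mul_of_nonneg_left ?_ h.D_pos.le)
  refine (le_S (f := fun K => ψ (I ++ K ++ J)) (fun _ => h.nonneg _) K).trans ?_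
  exact Finset.single_le_sum (f := fun k => S k (fun K => ψ (I ++ K ++ J)))
    (fun _ _ => S_nonneg fun _ => h.nonneg _) (Finset.mem_range.2 (by omega))

/-- a constant -/
noncomputable def M (p : ℕ) (ψ : List A → ℝ) : ℝ := ∑ k ∈ Finset.range (p + 1), S k ψ

lemma M_pos (h : Adm p D ψ) : 0 < M p ψ :=
  Finset.sum_pos (fun k _ => h.Z_pos k) ⟨0, by simp⟩

lemma loR (h : Adm p D ψ) (Q : List A) (b : ℕ) :
    ψ Q * S b ψ ≤ D ^ 2 * M p ψ * S b (fun v => ψ (Q ++ v)) := by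
  calc ψ Q * S b ψ = S b (fun V => ψ Q * ψ V) := by rw [S_mul]
    _ ≤ S b (fun V => D * ∑ k ∈ Finset.range (p + 1), S k (fun K => ψ (Q ++ K ++ V))) :=
        S_mono fun V _ => h.sup_sum Q V
    _ = D * ∑ k ∈ Finset.range (p + 1), S (k + b) (fun w => ψ (Q ++ w)) := by
        rw [S_mul, S_sum]
        congr 1
        refine Finset.sum_congr rfl fun k _ => ?_
        rw [S_add, S_comm]
        simp only [List.append_assoc]
    _ ≤ D * ∑ k ∈ Finset.range (p + 1), D * S k ψ * S b (fun v => ψ (Q ++ v)) := by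
        refine mul_le_mul_of_nonneg_left (Finset.sum_le_sum fun k _ => ?_) h.D_pos.le
        rw [add_comm, S_add, ← S_mul]
        refine S_mono fun v _ => ?_
        have := h.upR (Q ++ v) k
        simp only [List.append_assoc] at this
        linarith
    _ = _ := by
        rw [← Finset.sum_mul, ← Finset.mul_sum, M]; ring

lemma loL (h : Adm p D ψ) (Q : List A) (b : ℕ) :
    S b ψ * ψ Q ≤ D ^ 2 * M p ψ * S b (fun v => ψ (v ++ Q)) := by
  calc S b ψ * ψ Q = S b (fun V => ψ V * ψ Q) := by rw [S_mul']
    _ ≤ S b (fun V => D * ∑ k ∈ Finset.range (p + 1), S k (fun K => ψ (V ++ K ++ Q))) :=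
        S_mono fun V _ => h.sup_sum V Q
    _ = D * ∑ k ∈ Finset.range (p + 1), S (b + k) (fun w => ψ (w ++ Q)) := by
        rw [S_mul, S_sum]
        congr 1
        refine Finset.sum_congr rfl fun k _ => ?_
        rw [S_add]
    _ ≤ D * ∑ k ∈ Finset.range (p + 1), D * S k ψ * S b (fun v => ψ (v ++ Q)) := by
        refine mul_le_mul_of_nonneg_left (Finset.sum_le_sum fun k _ => ?_) h.D_pos.le
        rw [add_comm, S_add, S_comm, ← S_mul]
        refine S_mono fun v _ => ?_
        have := h.upL (v ++ Q) k
        simp only [List.append_assoc] at this ⊢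
        linarith
    _ = _ := by
        rw [← Finset.sum_mul, ← Finset.mul_sum, M]; ring

lemma Z_sub (h : Adm p D ψ) (n m : ℕ) : S (n + m) ψ ≤ D * S n ψ * S m ψ := by
  rw [S_add]
  refine (S_mono fun u _ => h.upR u m).trans (le_of_eq ?_)
  rw [S_mul', S_mul]

lemma Z_sup (h : Adm p D ψ) (n m : ℕ) : S n ψ * S m ψ ≤ D ^ 2 * M p ψ * S (n + m) ψ := by
  rw [S_add, ← S_mul', ← S_mul]
  exact S_mono fun u _ => h.loR u m

lemma exists_P (h : Adm p D ψ) : ∃ P C : ℝ,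
    Tendsto (fun n : ℕ => Real.log (S n ψ) / n) atTop (𝓝 P) ∧
    ∀ n : ℕ, |Real.log (S n ψ) - n * P| ≤ C := by
  have hD := h.D_pos
  have hM := h.M_pos
  obtain ⟨P, h1, h2⟩ := quasi_additive (fun n => Real.log (S n ψ))
    (max (Real.log D) (Real.log (D ^ 2 * M p ψ))) (by
      intro n m
      have hn := h.Z_pos n
      have hm := h.Z_pos m
      have hnm := h.Z_pos (n + m)
      have e1 := Real.log_le_log hnm (h.Z_sub n m)
      have e2 := Real.log_le_log (by positivity) (h.Z_sup n m)
      rw [Real.log_mul (by positivity) (by positivity), Real.log_mul (by positivity) (by positivity)] at e1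
      rw [Real.log_mul (by positivity) (by positivity), Real.log_mul (x := D ^ 2 * M p ψ) (by positivity) (by positivity)] at e2
      rw [abs_le]
      constructor
      · linarith [le_max_right (Real.log D) (Real.log (D ^ 2 * M p ψ))]
      · linarith [le_max_left (Real.log D) (Real.log (D ^ 2 * M p ψ))])
  exact ⟨P, _, h1, h2⟩

end Adm

/-- normalised version -/
structure Nrm (p : ℕ) (E : ℝ) (θ : List A → ℝ) : Prop where
  one_le : 1 ≤ E
  nonneg : ∀ I, 0 ≤ θ I
  Zlo : ∀ n, 1 ≤ E * S n θ
  Zup : ∀ n, S n θ ≤ E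
  loR : ∀ Q b, θ Q ≤ E * S b (fun v => θ (Q ++ v))
  upR : ∀ Q b, S b (fun v => θ (Q ++ v)) ≤ E * θ Q
  loL : ∀ Q b, θ Q ≤ E * S b (fun v => θ (v ++ Q))
  upL : ∀ Q b, S b (fun v => θ (v ++ Q)) ≤ E * θ Q
  mix : ∀ I J, θ I * θ J ≤ E * ∑ k ∈ Finset.range (p + 1), S k (fun K => θ (I ++ K ++ J))

lemma Nrm.weaken {E E' : ℝ} {θ : List A → ℝ} (h0 : ∀ I, 0 ≤ θ I) (h1 : 1 ≤ E')
    (hE : ∀ I J, θ I * θ J ≤ E * ∑ k ∈ Finset.range (p + 1), S k (fun K => θ (I ++ K ++ J)))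
    (hle : E ≤ E') (I J : List A) :
    θ I * θ J ≤ E' * ∑ k ∈ Finset.range (p + 1), S k (fun K => θ (I ++ K ++ J)) :=
  (hE I J).trans (mul_le_mul_of_nonneg_right hle
    (Finset.sum_nonneg fun _ _ => S_nonneg fun _ => h0 _))

lemma Adm.normalise (h : Adm p D ψ) {P C : ℝ} (hP : ∀ n : ℕ, |Real.log (S n ψ) - n * P| ≤ C) :
    ∃ E, Nrm p E (fun I => Real.exp (-(I.length * P)) * ψ I) := by
  have hD := h.D_pos
  have hM := h.M_pos
  have hC : 0 ≤ C := (abs_nonneg _).trans (hP 0)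
  set θ : List A → ℝ := fun I => Real.exp (-(I.length * P)) * ψ I with hθ
  have θ0 : ∀ I, 0 ≤ θ I := fun I => mul_nonneg (Real.exp_pos _).le (h.nonneg _)
  have SR : ∀ Q b, S b (fun v => θ (Q ++ v)) =
      Real.exp (-(Q.length * P)) * (Real.exp (-(b * P)) * S b (fun v => ψ (Q ++ v))) := by
    intro Q b
    rw [← S_mul, ← S_mul]
    refine S_congr fun w hw => ?_
    simp only [hθ]
    rw [← mul_assoc, ← Real.exp_add, List.length_append, hw]; push_cast; ring_nf
  have SL : ∀ Q b, S b (fun v => θ (v ++ Q)) =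
      Real.exp (-(Q.length * P)) * (Real.exp (-(b * P)) * S b (fun v => ψ (v ++ Q))) := by
    intro Q b
    rw [← S_mul, ← S_mul]
    refine S_congr fun w hw => ?_
    simp only [hθ]
    rw [← mul_assoc, ← Real.exp_add, List.length_append, hw]; push_cast; ring_nf
  have SZ : ∀ b, S b θ = Real.exp (-(b * P)) * S b ψ := by
    intro b; have := SR [] b; simpa using this
  have zup : ∀ n : ℕ, Real.exp (-(n * P)) * S n ψ ≤ Real.exp C := by
    intro n
    rw [← Real.exp_log (h.Z_pos n), ← Real.exp_add]
    apply Real.exp_le_exp.2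
    have := abs_le.1 (hP n); linarith
  have zlo : ∀ n : ℕ, 1 ≤ Real.exp C * (Real.exp (-(n * P)) * S n ψ) := by
    intro n
    rw [← Real.exp_log (h.Z_pos n), ← Real.exp_add, ← Real.exp_add]
    apply Real.one_le_exp
    have := abs_le.1 (hP n); linarith
  have hdm : 0 < D ^ 2 * M p ψ := by unfold Adm.M at *; positivity
  set F := D ^ 2 * M p ψ with hF
  have eC : 1 ≤ Real.exp C := Real.one_le_exp hC
  set G := Real.exp (p * |P|) with hG
  have G1 : 1 ≤ G := Real.one_le_exp (by positivity)
  have mix : ∀ I J, θ I * θ J ≤ (D * G) * ∑ k ∈ Finset.range (p + 1), S k (fun K => θ (I ++ K ++ J)) := by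
    intro I J
    have h1 := h.sup_sum I J
    have h2 : θ I * θ J = Real.exp (-((I.length + J.length) * P)) * (ψ I * ψ J) := by
      simp only [hθ]
      rw [show -((I.length + J.length : ℝ) * P) = -(I.length * P) + -(J.length * P) by ring, Real.exp_add]
      ring
    rw [h2]
    refine (mul_le_mul_of_nonneg_left h1 (Real.exp_pos _).le).trans ?_
    rw [Finset.mul_sum, Finset.mul_sum, Finset.mul_sum]
    refine Finset.sum_le_sum fun k hk => ?_
    rw [← S_mul, ← S_mul, ← S_mul]
    refine S_mono fun K hK => ?_
    simp only [hθ]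
    have hk' : (k : ℝ) ≤ p := by have := Finset.mem_range.1 hk; exact_mod_cast (by omega : k ≤ p)
    have : Real.exp (-((I.length + J.length) * P)) ≤ G * Real.exp (-((I ++ K ++ J).length * P)) := by
      rw [hG, ← Real.exp_add]
      apply Real.exp_le_exp.2
      simp only [List.length_append, hK]
      push_cast
      have : (k:ℝ) * P ≤ p * |P| :=
        (mul_le_mul_of_nonneg_left (le_abs_self P) (Nat.cast_nonneg k)).trans
          (mul_le_mul_of_nonneg_right hk' (abs_nonneg P))
      nlinarith
    calc _ = D * Real.exp (-((I.length + J.length) * P)) * ψ (I ++ K ++ J) := by ring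
      _ ≤ D * (G * Real.exp (-((I ++ K ++ J).length * P))) * ψ (I ++ K ++ J) := by
        have := h.nonneg (I ++ K ++ J)
        gcongr
      _ = _ := by ring
  let E := Real.exp C * (1 + D + F + D * G)
  have hDG : 0 < D * G := by positivity
  have E1 : Real.exp C ≤ E := le_mul_of_one_le_right (Real.exp_pos _).le (by linarith)
  have E2 : Real.exp C * D ≤ E := mul_le_mul_of_nonneg_left (by linarith) (Real.exp_pos _).le
  have E3 : Real.exp C * F ≤ E := mul_le_mul_of_nonneg_left (by linarith) (Real.exp_pos _).le
  have E4 : D * G ≤ E := by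
    have : Real.exp C * (D * G) ≤ E := mul_le_mul_of_nonneg_left (by linarith) (Real.exp_pos _).le
    nlinarith
  have nn : ∀ n : ℕ, 0 ≤ Real.exp (-(n * P)) * S n ψ := fun n =>
    mul_nonneg (Real.exp_pos _).le (h.Z_pos n).le
  refine ⟨E, ⟨eC.trans E1, θ0, ?_, ?_, ?_, ?_, ?_, ?_, Nrm.weaken θ0 (eC.trans E1) mix E4⟩⟩
  · intro n; rw [SZ]; exact (zlo n).trans (mul_le_mul_of_nonneg_right E1 (nn n))
  · intro n; rw [SZ]; exact (zup n).trans E1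
  · intro Q b
    have hs : 0 ≤ S b (fun v => ψ (Q ++ v)) := S_nonneg fun _ => h.nonneg _
    rw [SR]
    have h1 := h.loR Q b
    have h2 := zlo b
    have e0 := (Real.exp_pos (-(b * P))).le
    have key : ψ Q ≤ E * (Real.exp (-(b * P)) * S b (fun v => ψ (Q ++ v))) := by
      calc ψ Q ≤ (Real.exp C * (Real.exp (-(b * P)) * S b ψ)) * ψ Q :=
            le_mul_of_one_le_left (h.nonneg _) h2
        _ = Real.exp C * Real.exp (-(b * P)) * (ψ Q * S b ψ) := by ring
        _ ≤ Real.exp C * Real.exp (-(b * P)) * (F * S b (fun v => ψ (Q ++ v))) := by gcongr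
        _ = Real.exp C * F * (Real.exp (-(b * P)) * S b (fun v => ψ (Q ++ v))) := by ring
        _ ≤ _ := mul_le_mul_of_nonneg_right E3 (by positivity)
    calc θ Q = Real.exp (-(Q.length * P)) * ψ Q := rfl
      _ ≤ Real.exp (-(Q.length * P)) * _ := mul_le_mul_of_nonneg_left key (Real.exp_pos _).le
      _ = _ := by ring
  · intro Q b
    rw [SR]
    have h1 := h.upR Q b
    have key : Real.exp (-(b * P)) * S b (fun v => ψ (Q ++ v)) ≤ E * ψ Q := by
      calc _ ≤ Real.exp (-(b * P)) * (D * ψ Q * S b ψ) := by gcongr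
        _ = (Real.exp (-(b * P)) * S b ψ) * (D * ψ Q) := by ring
        _ ≤ Real.exp C * (D * ψ Q) :=
            mul_le_mul_of_nonneg_right (zup b) (mul_nonneg hD.le (h.nonneg _))
        _ = Real.exp C * D * ψ Q := by ring
        _ ≤ _ := mul_le_mul_of_nonneg_right E2 (h.nonneg _)
    refine (mul_le_mul_of_nonneg_left key (Real.exp_pos _).le).trans (le_of_eq ?_)
    simp only [hθ]; ring
  · intro Q b
    have hs : 0 ≤ S b (fun v => ψ (v ++ Q)) := S_nonneg fun _ => h.nonneg _
    rw [SL]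
    have h1 := h.loL Q b
    have h2 := zlo b
    have e0 := (Real.exp_pos (-(b * P))).le
    have key : ψ Q ≤ E * (Real.exp (-(b * P)) * S b (fun v => ψ (v ++ Q))) := by
      calc ψ Q ≤ (Real.exp C * (Real.exp (-(b * P)) * S b ψ)) * ψ Q :=
            le_mul_of_one_le_left (h.nonneg _) h2
        _ = Real.exp C * Real.exp (-(b * P)) * (S b ψ * ψ Q) := by ring
        _ ≤ Real.exp C * Real.exp (-(b * P)) * (F * S b (fun v => ψ (v ++ Q))) := by gcongr
        _ = Real.exp C * F * (Real.exp (-(b * P)) * S b (fun v => ψ (v ++ Q))) := by ring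
        _ ≤ _ := mul_le_mul_of_nonneg_right E3 (by positivity)
    calc θ Q = Real.exp (-(Q.length * P)) * ψ Q := rfl
      _ ≤ Real.exp (-(Q.length * P)) * _ := mul_le_mul_of_nonneg_left key (Real.exp_pos _).le
      _ = _ := by ring
  · intro Q b
    rw [SL]
    have h1 := h.upL Q b
    have key : Real.exp (-(b * P)) * S b (fun v => ψ (v ++ Q)) ≤ E * ψ Q := by
      calc _ ≤ Real.exp (-(b * P)) * (D * S b ψ * ψ Q) := by gcongr
        _ = (Real.exp (-(b * P)) * S b ψ) * (D * ψ Q) := by ring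
        _ ≤ Real.exp C * (D * ψ Q) :=
            mul_le_mul_of_nonneg_right (zup b) (mul_nonneg hD.le (h.nonneg _))
        _ = Real.exp C * D * ψ Q := by ring
        _ ≤ _ := mul_le_mul_of_nonneg_right E2 (h.nonneg _)
    refine (mul_le_mul_of_nonneg_left key (Real.exp_pos _).le).trans (le_of_eq ?_)
    simp only [hθ]; ring

end comb
end Gb

namespace Gb

section ulim
variable {A : Type} [Fintype A] {p : ℕ} {E : ℝ} {θ : List A → ℝ}

namespace Nrm

/-- the normalised weight of the words of length `2N` which have `I` at position `i` -/
noncomputable def t (θ : List A → ℝ) (N i : ℕ) (I : List A) : ℝ :=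
  S i (fun u => S (2 * N - i - I.length) (fun v => θ (u ++ I ++ v))) / S (2 * N) θ

lemma E_pos (h : Nrm p E θ) : 0 < E := by linarith [h.one_le]

lemma Z_pos (h : Nrm p E θ) (n : ℕ) : 0 < S n θ := by
  have := h.Zlo n
  by_contra hc
  nlinarith [h.one_le]

lemma t_nonneg (h : Nrm p E θ) (N i : ℕ) (I : List A) : 0 ≤ t θ N i I :=
  div_nonneg (S_nonneg fun _ => S_nonneg fun _ => h.nonneg _) (h.Z_pos _).le

lemma t_le (h : Nrm p E θ) (N i : ℕ) (I : List A) : t θ N i I ≤ E ^ 3 * θ I := by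
  unfold t
  rw [div_le_iff₀ (h.Z_pos _)]
  have h1 : S i (fun u => S (2 * N - i - I.length) (fun v => θ (u ++ I ++ v))) ≤ E ^ 2 * θ I := by
    calc _ ≤ S i (fun u => E * θ (u ++ I)) := S_mono fun u _ => h.upR _ _
      _ = E * S i (fun u => θ (u ++ I)) := by rw [S_mul]
      _ ≤ E * (E * θ I) := mul_le_mul_of_nonneg_left (h.upL _ _) h.E_pos.le
      _ = _ := by ring
  have h2 := h.Zlo (2 * N)
  have h3 : 0 ≤ E ^ 2 * θ I := mul_nonneg (pow_nonneg h.E_pos.le _) (h.nonneg _)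
  nlinarith

lemma le_t (h : Nrm p E θ) (N i : ℕ) (I : List A) : θ I ≤ E ^ 3 * t θ N i I := by
  unfold t
  rw [← mul_div_assoc, le_div_iff₀ (h.Z_pos _)]
  have h1 : θ I ≤ E ^ 2 * S i (fun u => S (2 * N - i - I.length) (fun v => θ (u ++ I ++ v))) := by
    calc θ I ≤ E * S i (fun u => θ (u ++ I)) := h.loL _ _
      _ ≤ E * S i (fun u => E * S (2 * N - i - I.length) (fun v => θ (u ++ I ++ v))) :=
        mul_le_mul_of_nonneg_left (S_mono fun u _ => h.loR _ _) h.E_pos.le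
      _ = _ := by rw [S_mul]; ring
  have h2 := h.Zup (2 * N)
  have h3 := h.nonneg I
  have h4 := h.E_pos
  calc θ I * S (2 * N) θ ≤ θ I * E := mul_le_mul_of_nonneg_left h2 h3
    _ ≤ (E ^ 2 * S i (fun u => S (2 * N - i - I.length) (fun v => θ (u ++ I ++ v)))) * E :=
      mul_le_mul_of_nonneg_right h1 h4.le
    _ = _ := by ring

lemma t_nil (h : Nrm p E θ) {N i : ℕ} (hi : i ≤ N) : t θ N i [] = 1 := by
  unfold t
  rw [div_eq_one_iff_eq (h.Z_pos _).ne']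
  have : 2 * N = i + (2 * N - i) := by omega
  conv_rhs => rw [this, S_add]
  simp

lemma t_right {N i : ℕ} {I : List A} (hi : i ≤ N) (hI : I.length + 1 ≤ N) :
    S 1 (fun a => t θ N i (I ++ a)) = t θ N i I := by
  unfold t
  rw [S_div]
  congr 1
  rw [S_comm]
  refine S_congr fun u _ => ?_
  have : 2 * N - i - I.length = 1 + (2 * N - i - I.length - 1) := by omega
  rw [this, S_add]
  refine S_congr fun a ha => ?_
  rw [List.length_append, ha, Nat.sub_add_eq]
  simp only [List.append_assoc]

lemma t_left {N i : ℕ} {I : List A} :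
    S 1 (fun a => t θ N i (a ++ I)) = t θ N (i + 1) I := by
  unfold t
  rw [S_div]
  congr 1
  rw [S_comm, S_add]
  refine S_congr fun u _ => S_congr fun a ha => ?_
  rw [List.length_append, ha, show 2 * N - i - (1 + I.length) = 2 * N - (i + 1) - I.length by omega]
  simp only [List.append_assoc]

/-- averages -/
noncomputable def av (θ : List A → ℝ) (N : ℕ) (I : List A) : ℝ :=
  (∑ i ∈ Finset.range N, t θ N i I) / N

lemma av_nonneg (h : Nrm p E θ) (N : ℕ) (I : List A) : 0 ≤ av θ N I :=
  div_nonneg (Finset.sum_nonneg fun _ _ => h.t_nonneg _ _ _) (Nat.cast_nonneg _)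

lemma av_le (h : Nrm p E θ) (N : ℕ) (I : List A) : av θ N I ≤ E ^ 3 * θ I := by
  have h0 : 0 ≤ E ^ 3 * θ I := mul_nonneg (pow_nonneg h.E_pos.le _) (h.nonneg _)
  refine div_le_of_le_mul₀ (Nat.cast_nonneg _) h0 ?_
  refine (Finset.sum_le_card_nsmul _ _ _ fun i _ => h.t_le N i I).trans (le_of_eq ?_)
  simp; ring

lemma le_av (h : Nrm p E θ) {N : ℕ} (hN : 0 < N) (I : List A) : θ I ≤ E ^ 3 * av θ N I := by
  unfold av
  have hN' : (0:ℝ) < N := by exact_mod_cast hN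
  rw [← mul_div_assoc, le_div_iff₀ hN', Finset.mul_sum]
  have := Finset.card_nsmul_le_sum (Finset.range N) (fun i => E ^ 3 * t θ N i I) (θ I)
    (fun i _ => h.le_t N i I)
  simp at this; linarith

lemma exists_m (h : Nrm p E θ) : ∃ m : List A → ℝ, m [] = 1 ∧ (∀ I, 0 ≤ m I) ∧
    (∀ I, S 1 (fun a => m (I ++ a)) = m I) ∧ (∀ I, S 1 (fun a => m (a ++ I)) = m I) ∧
    (∀ I, θ I ≤ E ^ 3 * m I) ∧ (∀ I, m I ≤ E ^ 3 * θ I) := by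
  let U : Ultrafilter ℕ := Filter.hyperfilter ℕ
  have hU : (U : Filter ℕ) ≤ atTop := Nat.hyperfilter_le_atTop
  have lim : ∀ I, ∃ x ∈ Set.Icc 0 (E ^ 3 * θ I), Tendsto (fun N => av θ N I) U (𝓝 x) := by
    intro I
    obtain ⟨x, hx, hx'⟩ := (isCompact_Icc (a := (0:ℝ)) (b := E ^ 3 * θ I)).ultrafilter_le_nhds'
      (U.map (fun N => av θ N I))
      (Filter.Eventually.of_forall (f := (U : Filter ℕ)) fun N => ⟨h.av_nonneg N I, h.av_le N I⟩)
    exact ⟨x, hx, hx'⟩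
  choose m hm hlim using lim
  have ev : ∀ k : ℕ, ∀ᶠ N in (U : Filter ℕ), k ≤ N := fun k => hU (eventually_ge_atTop k)
  have limS : ∀ f : List A → List A, Tendsto (fun N => S 1 (fun a => av θ N (f a))) U
      (𝓝 (S 1 (fun a => m (f a)))) := by
    intro f
    exact tendsto_finsetSum _ fun w _ => hlim _
  refine ⟨m, ?_, fun I => (hm I).1, ?_, ?_, ?_, fun I => (hm I).2⟩
  · refine tendsto_nhds_unique (hlim []) (tendsto_const_nhds.congr' ?_)
    filter_upwards [ev 1] with N hN
    have hN' : (0:ℝ) < N := by exact_mod_cast hN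
    unfold av
    rw [Finset.sum_congr rfl fun i hi => h.t_nil (Finset.mem_range.1 hi).le]
    simp [hN'.ne']
  · intro I
    refine tendsto_nhds_unique (limS (fun a => I ++ a)) ((hlim I).congr' ?_)
    filter_upwards [ev (I.length + 1)] with N hN
    unfold av
    rw [S_div, S_sum]
    congr 1
    exact Finset.sum_congr rfl fun i hi => (t_right (Finset.mem_range.1 hi).le hN).symm
  · intro I
    refine tendsto_nhds_unique (limS (fun a => a ++ I)) ?_
    have e0 : Tendsto (fun N : ℕ => (E ^ 3 * θ I) / (N:ℝ)) U (𝓝 0) :=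
      (tendsto_const_nhds.div_atTop tendsto_natCast_atTop_atTop).mono_left hU
    have e1 : Tendsto (fun N : ℕ => (t θ N N I - t θ N 0 I) / (N:ℝ)) U (𝓝 0) := by
      refine squeeze_zero_norm (fun N => ?_) e0
      rw [Real.norm_eq_abs, abs_div, Nat.abs_cast]
      gcongr
      rw [abs_le]
      constructor <;> linarith [h.t_nonneg N N I, h.t_nonneg N 0 I, h.t_le N N I, h.t_le N 0 I]
    have := (hlim I).add e1
    rw [add_zero] at this
    refine this.congr fun N => ?_
    unfold av
    rw [S_div, S_sum, ← add_div]
    congr 1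
    rw [Finset.sum_congr rfl fun i _ => t_left (θ := θ) (N := N) (i := i) (I := I)]
    have a1 := Finset.sum_range_succ (fun i => t θ N i I) N
    have a2 := Finset.sum_range_succ' (fun i => t θ N i I) N
    linarith
  · intro I
    refine le_of_tendsto_of_tendsto tendsto_const_nhds ((hlim I).const_mul (E ^ 3)) ?_
    filter_upwards [ev 1] with N hN using h.le_av hN I

end Nrm
end ulim
end Gb

namespace Gb

section cylsets
variable {A : Type}

lemma wordOf_length (x : ℕ → A) (n : ℕ) : (wordOf x n).length = n := by simp [wordOf]

lemma mem_cyl {x : ℕ → A} {I : List A} : x ∈ cyl I ↔ wordOf x I.length = I := by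
  constructor
  · intro h
    apply List.ext_getElem
    · simp [wordOf]
    · intro i h1 h2
      have := h ⟨i, h2⟩
      simpa [wordOf] using this
  · intro h i
    have h2 : I.get i = (wordOf x I.length).get (i.cast (by simp [wordOf])) := by
      simp only [List.get_eq_getElem, Fin.val_cast]
      congr 1
      exact h.symm
    rw [h2]
    simp [wordOf]
    rfl

lemma mem_cyl' {x : ℕ → A} {I : List A} {n : ℕ} (hn : I.length = n) : x ∈ cyl I ↔ wordOf x n = I := by
  rw [mem_cyl, hn]

lemma shift_iter (n : ℕ) (x : ℕ → A) : shiftMap^[n] x = fun i => x (n + i) := by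
  induction n generalizing x with
  | zero => simp
  | succ n ih =>
    rw [Function.iterate_succ_apply, ih]
    funext i
    simp only [shiftMap]
    congr 1; omega

lemma wordOf_add (x : ℕ → A) (n m : ℕ) :
    wordOf x (n + m) = wordOf x n ++ wordOf (shiftMap^[n] x) m := by
  rw [shift_iter]
  unfold wordOf
  rw [← List.ofFn_fin_append]
  congr 1
  funext i
  refine Fin.addCases (fun j => ?_) (fun j => ?_) i <;> simp

lemma wordOf_take (x : ℕ → A) {n m : ℕ} (h : n ≤ m) : (wordOf x m).take n = wordOf x n := by
  obtain ⟨k, rfl⟩ := Nat.exists_eq_add_of_le h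
  rw [wordOf_add, List.take_left' (wordOf_length x n)]

lemma cyl_append (I J : List A) : cyl (I ++ J) = cyl I ∩ shiftMap^[I.length] ⁻¹' cyl J := by
  ext x
  rw [Set.mem_inter_iff, Set.mem_preimage, mem_cyl, mem_cyl, mem_cyl, List.length_append, wordOf_add]
  constructor
  · intro h
    exact List.append_inj h (by simp [wordOf])
  · rintro ⟨h1, h2⟩; rw [h1, h2]

/-- finite union of cylinders -/
def cs (n : ℕ) (T : Set (List A)) : Set (ℕ → A) := {x | wordOf x n ∈ T}

lemma cs_lift {n m : ℕ} (h : n ≤ m) (T : Set (List A)) : cs n T = cs m {w | w.take n ∈ T} := by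
  ext x
  simp only [cs, Set.mem_ofPred_eq, wordOf_take x h]

lemma cs_ring : IsSetRing {s : Set (ℕ → A) | ∃ n T, s = cs n T} where
  empty_mem := ⟨0, ∅, by simp [cs]⟩
  union_mem := by
    rintro _ _ ⟨n, T, rfl⟩ ⟨m, R, rfl⟩
    rw [cs_lift (le_max_left n m), cs_lift (le_max_right n m)]
    exact ⟨max n m, _ ∪ _, rfl⟩
  sdiff_mem := by
    rintro _ _ ⟨n, T, rfl⟩ ⟨m, R, rfl⟩
    rw [cs_lift (le_max_left n m), cs_lift (le_max_right n m)]
    exact ⟨max n m, _ \ _, rfl⟩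

variable [Fintype A] [TopologicalSpace A] [DiscreteTopology A] [MeasurableSpace A] [BorelSpace A]

lemma shift_cont : Continuous (shiftMap : (ℕ → A) → (ℕ → A)) :=
  continuous_pi fun i => continuous_apply (i + 1)

lemma shift_meas : Measurable (shiftMap : (ℕ → A) → (ℕ → A)) :=
  measurable_pi_iff.2 fun i => measurable_pi_apply (i + 1)

lemma cyl_clopen (I : List A) : IsClopen (cyl I) := by
  have : cyl I = ⋂ i : Fin I.length, (fun x : ℕ → A => x i) ⁻¹' {I.get i} := by
    ext x; simp [cyl]
  rw [this]
  exact isClopen_iInter_of_finite fun i => (isClopen_discrete _).preimage (continuous_apply _)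

lemma cyl_meas (I : List A) : MeasurableSet (cyl I) := by
  have : cyl I = ⋂ i : Fin I.length, (fun x : ℕ → A => x i) ⁻¹' {I.get i} := by
    ext x; simp [cyl]
  rw [this]
  exact MeasurableSet.iInter fun i => measurable_pi_apply _ (measurableSet_singleton _)

lemma cyl_disj {n : ℕ} {I J : List A} (hI : I.length = n) (hJ : J.length = n) (h : I ≠ J) :
    Disjoint (cyl I) (cyl J) := by
  rw [Set.disjoint_left]
  intro x h1 h2
  rw [mem_cyl' hI] at h1
  rw [mem_cyl' hJ] at h2
  exact h (h1.symm.trans h2)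

lemma partition_gen {ρ : Measure (ℕ → A)} [IsFiniteMeasure ρ] {f : (ℕ → A) → (ℕ → A)}
    (hf : Measurable f) {B : Set (ℕ → A)} (hB : MeasurableSet B) (n : ℕ) :
    S n (fun w => ρ.real (B ∩ f ⁻¹' cyl w)) = ρ.real B := by
  unfold S
  rw [← measureReal_biUnion_finset]
  · congr 1
    ext x
    simp only [Finset.mem_univ, Set.iUnion_true, Set.mem_iUnion, Set.mem_inter_iff, Set.mem_preimage]
    refine ⟨fun ⟨_, h, _⟩ => h, fun h => ⟨fun i => f x i, h, ?_⟩⟩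
    rw [mem_cyl' (n := n) (by simp)]
    rfl
  · intro w _ v _ hwv
    refine Disjoint.mono Set.inter_subset_right Set.inter_subset_right (Disjoint.preimage f ?_)
    exact cyl_disj (n := n) (by simp) (by simp) fun h => hwv (List.ofFn_injective h)
  · intro w _
    exact hB.inter (hf (cyl_meas _))

lemma partition_id {ρ : Measure (ℕ → A)} [IsFiniteMeasure ρ] {B : Set (ℕ → A)}
    (hB : MeasurableSet B) (n : ℕ) : S n (fun w => ρ.real (B ∩ cyl w)) = ρ.real B :=
  partition_gen measurable_id hB n

lemma cs_eq (n : ℕ) (T : Set (List A)) :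
    cs n T = ⋃ w : Fin n → A, ⋃ (_ : List.ofFn w ∈ T), cyl (List.ofFn w) := by
  ext x
  simp only [Set.mem_iUnion]
  constructor
  · intro h
    exact ⟨fun i => x i, h, (mem_cyl' (n := n) (by simp)).2 rfl⟩
  · rintro ⟨w, h, h2⟩
    rw [mem_cyl' (n := n) (by simp)] at h2
    show wordOf x n ∈ T
    rw [h2]; exact h

lemma cs_meas (n : ℕ) (T : Set (List A)) : MeasurableSet (cs n T) := by
  rw [cs_eq]
  exact MeasurableSet.iUnion fun w => MeasurableSet.iUnion fun _ => cyl_meas _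

lemma cs_inter {n : ℕ} {T : Set (List A)} {w : List A} (hw : w.length = n) :
    cs n T ∩ cyl w = if w ∈ T then cyl w else ∅ := by
  ext x
  rw [Set.mem_inter_iff, mem_cyl' hw]
  split_ifs with h
  · rw [mem_cyl' hw]
    exact ⟨fun h => h.2, fun h2 => ⟨by show wordOf x n ∈ T; rw [h2]; exact h, h2⟩⟩
  · simp only [Set.mem_empty_iff_false, iff_false, not_and]
    rintro h1 h2
    apply h
    rw [← h2]; exact h1

lemma real_cs {ρ : Measure (ℕ → A)} [IsFiniteMeasure ρ] (n : ℕ) (T : Set (List A)) :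
    ρ.real (cs n T) = S n (fun w => if w ∈ T then ρ.real (cyl w) else 0) := by
  rw [← partition_id (cs_meas n T) n]
  refine S_congr fun w hw => ?_
  rw [cs_inter hw]
  split_ifs <;> simp

lemma gen_cs : (MeasurableSpace.pi : MeasurableSpace (ℕ → A)) =
    MeasurableSpace.generateFrom {s : Set (ℕ → A) | ∃ n T, s = cs n T} := by
  apply le_antisymm
  · refine iSup_le fun i => ?_
    rw [← measurable_iff_comap_le]
    refine @measurable_to_countable' _ _ _ _ (_) _ fun a => ?_
    apply MeasurableSpace.measurableSet_generateFrom
    refine ⟨i + 1, {w | w[i]? = some a}, ?_⟩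
    ext x
    simp [cs, wordOf, -List.ofFn_succ]
  · apply MeasurableSpace.generateFrom_le
    rintro _ ⟨n, T, rfl⟩
    exact cs_meas n T

lemma ext_cyl {μ ν : Measure (ℕ → A)} [IsProbabilityMeasure μ] [IsProbabilityMeasure ν]
    (h : ∀ I, μ.real (cyl I) = ν.real (cyl I)) : μ = ν := by
  refine ext_of_generate_finite _ gen_cs cs_ring.isSetSemiring.isPiSystem ?_ (by simp)
  rintro _ ⟨n, T, rfl⟩
  rw [← measureReal_eq_measureReal_iff, real_cs, real_cs]
  simp only [h]

lemma approx_cs {ρ : Measure (ℕ → A)} [IsFiniteMeasure ρ] {B : Set (ℕ → A)} (hB : MeasurableSet B)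
    {ε : ℝ} (hε : 0 < ε) : ∃ n T, ρ.real (cs n T ∆ B) < ε := by
  obtain ⟨t, ⟨n, T, rfl⟩, h⟩ := exists_measure_symmDiff_lt_of_generateFrom_isSetRing (μ := ρ) cs_ring
    ⟨{Set.univ}, by simp, by
      rintro _ rfl
      exact ⟨0, Set.univ, by simp [cs]⟩, by simp⟩ gen_cs hB (ε := ENNReal.ofReal ε) (by simpa using hε)
  refine ⟨n, T, ?_⟩
  rw [measureReal_def]
  rw [← ENNReal.ofReal_toReal (measure_ne_top ρ _)] at h
  exact (ENNReal.ofReal_lt_ofReal_iff hε).1 h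

lemma real_right {ρ : Measure (ℕ → A)} [IsFiniteMeasure ρ] (I : List A) (n : ℕ) :
    S n (fun v => ρ.real (cyl (I ++ v))) = ρ.real (cyl I) := by
  simp only [cyl_append]
  exact partition_gen (shift_meas.iterate _) (cyl_meas I) n

lemma real_left {ρ : Measure (ℕ → A)} [IsFiniteMeasure ρ] (hρ : MeasurePreserving shiftMap ρ ρ)
    (I : List A) (n : ℕ) :
    S n (fun v => ρ.real (cyl (v ++ I))) = ρ.real (cyl I) := by
  have h1 : MeasurableSet (shiftMap^[n] ⁻¹' cyl I) := (shift_meas.iterate n) (cyl_meas I)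
  have h2 : ρ.real (shiftMap^[n] ⁻¹' cyl I) = ρ.real (cyl I) :=
    (hρ.iterate n).measureReal_preimage (cyl_meas I).nullMeasurableSet
  rw [← h2, ← partition_id h1 n]
  refine S_congr fun w hw => ?_
  rw [cyl_append, hw, Set.inter_comm]

lemma cyl_nil : cyl ([] : List A) = Set.univ := by
  ext x; simp [cyl]

lemma right_all {m : List A → ℝ} (hr : ∀ I, S 1 (fun a => m (I ++ a)) = m I) (n : ℕ) (I : List A) :
    S n (fun v => m (I ++ v)) = m I := by
  induction n generalizing I with
  | zero => simp [S_zero]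
  | succ n ih =>
    rw [S_add]
    rw [← ih I]
    refine S_congr fun u _ => ?_
    rw [← hr (I ++ u)]
    simp only [List.append_assoc]

lemma exists_measure [Nonempty A] {m : List A → ℝ} (h1 : m [] = 1) (h0 : ∀ I, 0 ≤ m I)
    (hr : ∀ I, S 1 (fun a => m (I ++ a)) = m I) :
    ∃ μ : ProbabilityMeasure (ℕ → A), ∀ I, (μ : Measure (ℕ → A)).real (cyl I) = m I := by
  obtain ⟨a0⟩ := ‹Nonempty A›
  let e : List A → (ℕ → A) := fun w i => w.getD i a0
  let ν : ℕ → Measure (ℕ → A) := fun n =>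
    ∑ w : Fin n → A, ENNReal.ofReal (m (List.ofFn w)) • Measure.dirac (e (List.ofFn w))
  have tot : ∀ n, S n m = 1 := fun n => by
    have := right_all hr n []; simpa [h1] using this
  have hν : ∀ n, IsProbabilityMeasure (ν n) := by
    intro n
    constructor
    simp only [ν, Measure.coe_finsetSum, Finset.sum_apply, Measure.smul_apply, measure_univ,
      smul_eq_mul, mul_one]
    rw [← ENNReal.ofReal_sum_of_nonneg (fun _ _ => h0 _)]
    have := tot n
    unfold S at this
    rw [this]; simp
  have val : ∀ n I, (ν n).real (cyl I) = S n (fun w => m w * if e w ∈ cyl I then 1 else 0) := by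
    intro n I
    unfold S
    rw [measureReal_def]
    simp only [ν, Measure.coe_finsetSum, Finset.sum_apply, Measure.smul_apply, smul_eq_mul]
    rw [ENNReal.toReal_sum]
    · refine Finset.sum_congr rfl fun w _ => ?_
      rw [Measure.dirac_apply' _ (cyl_meas I), ENNReal.toReal_mul, ENNReal.toReal_ofReal (h0 _)]
      simp only [Set.indicator]
      split_ifs <;> simp
    · intro w _
      exact ENNReal.mul_ne_top (by simp) (measure_ne_top _ _)
  have val2 : ∀ I k, (ν (I.length + k)).real (cyl I) = m I := by
    intro I k
    rw [val, S_add]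
    have : S I.length (fun u => S k (fun v => m (u ++ v) * if e (u ++ v) ∈ cyl I then 1 else 0)) =
        S I.length (fun u => if u = I then m I else 0) := by
      refine S_congr fun u hu => ?_
      have : ∀ v, e (u ++ v) ∈ cyl I ↔ u = I := by
        intro v
        rw [mem_cyl]
        have : wordOf (e (u ++ v)) I.length = u := by
          apply List.ext_getElem
          · simp [wordOf, hu]
          · intro i h1 h2
            simp [wordOf, e, List.getElem?_append_left h2, h2]
        rw [this]
      simp only [this]
      split_ifs with h
      · subst h; simp only [mul_one]; exact right_all hr k u
      · simp [S]
    rw [this]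
    unfold S
    rw [Finset.sum_eq_single (fun i => I.get i)]
    · simp
    · intro w _ hw
      refine if_neg ?_
      intro h
      apply hw
      apply List.ofFn_injective
      rw [h]; simp
    · simp
  let U : Ultrafilter ℕ := Filter.hyperfilter ℕ
  have hU : (U : Filter ℕ) ≤ atTop := Nat.hyperfilter_le_atTop
  let νp : ℕ → ProbabilityMeasure (ℕ → A) := fun n => ⟨ν n, hν n⟩
  obtain ⟨μ, -, hμ⟩ := (isCompact_univ (X := ProbabilityMeasure (ℕ → A))).ultrafilter_le_nhds'
    (U.map νp) Filter.univ_mem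
  refine ⟨μ, fun I => ?_⟩
  have hμ' : Tendsto νp U (𝓝 μ) := hμ
  have t := ProbabilityMeasure.tendsto_measure_of_null_frontier_of_tendsto' hμ' (E := cyl I)
    (by rw [(cyl_clopen I).frontier_eq]; simp)
  have t2 := (ENNReal.tendsto_toReal (measure_ne_top (μ : Measure (ℕ → A)) (cyl I))).comp t
  refine tendsto_nhds_unique t2 (tendsto_const_nhds.congr' ?_)
  filter_upwards [hU (eventually_ge_atTop I.length)] with n hn
  obtain ⟨k, rfl⟩ := Nat.exists_eq_add_of_le hn
  exact (val2 I k).symm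

lemma exists_inv_measure [Nonempty A] {m : List A → ℝ} (h1 : m [] = 1) (h0 : ∀ I, 0 ≤ m I)
    (hr : ∀ I, S 1 (fun a => m (I ++ a)) = m I) (hl : ∀ I, S 1 (fun a => m (a ++ I)) = m I) :
    ∃ μ : ProbabilityMeasure (ℕ → A), (∀ I, (μ : Measure (ℕ → A)).real (cyl I) = m I) ∧
      MeasurePreserving shiftMap (μ : Measure (ℕ → A)) (μ : Measure (ℕ → A)) := by
  obtain ⟨μ, hμ⟩ := exists_measure h1 h0 hr
  refine ⟨μ, hμ, shift_meas, ?_⟩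
  have : IsProbabilityMeasure ((μ : Measure (ℕ → A)).map shiftMap) :=
    Measure.isProbabilityMeasure_map shift_meas.aemeasurable
  apply ext_cyl
  intro I
  rw [map_measureReal_apply shift_meas (cyl_meas I), hμ, ← hl I,
    ← partition_id (shift_meas (cyl_meas I)) 1]
  refine S_congr fun a ha => ?_
  rw [← hμ, cyl_append, ha, Set.inter_comm]
  rfl

end cylsets
end Gb

namespace Gb

section erg
variable {A : Type} [Fintype A] [TopologicalSpace A] [DiscreteTopology A] [MeasurableSpace A]
  [BorelSpace A]

lemma ergodic_of_mix {μ : Measure (ℕ → A)} [IsProbabilityMeasure μ]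
    (hμ : MeasurePreserving shiftMap μ μ) {p : ℕ} {F : ℝ} (hF : 0 ≤ F)
    (mix : ∀ I J, μ.real (cyl I) * μ.real (cyl J) ≤
      F * ∑ k ∈ Finset.range (p + 1), S k (fun K => μ.real (cyl (I ++ K ++ J)))) :
    Ergodic shiftMap μ := by
  have sm : ∀ j : ℕ, Measurable (shiftMap^[j] : (ℕ → A) → (ℕ → A)) := fun j => shift_meas.iterate j
  -- mixing for cylinders
  have mix1 : ∀ I J, μ.real (cyl I) * μ.real (cyl J) ≤
      F * ∑ k ∈ Finset.range (p + 1), μ.real (cyl I ∩ shiftMap^[I.length + k] ⁻¹' cyl J) := by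
    intro I J
    refine (mix I J).trans (le_of_eq ?_)
    congr 1
    refine Finset.sum_congr rfl fun k _ => ?_
    rw [← partition_gen (sm I.length) ((cyl_meas I).inter (sm (I.length + k) (cyl_meas J))) k]
    refine S_congr fun K hK => ?_
    rw [cyl_append, cyl_append, List.length_append, hK, Set.inter_right_comm]
  have mix2 : ∀ I n T, μ.real (cyl I) * μ.real (cs n T) ≤
      F * ∑ k ∈ Finset.range (p + 1), μ.real (cyl I ∩ shiftMap^[I.length + k] ⁻¹' cs n T) := by
    intro I n T
    have : ∀ k, μ.real (cyl I ∩ shiftMap^[I.length + k] ⁻¹' cs n T) =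
        S n (fun J => if J ∈ T then μ.real (cyl I ∩ shiftMap^[I.length + k] ⁻¹' cyl J) else 0) := by
      intro k
      rw [← partition_gen (sm (I.length + k))
        ((cyl_meas I).inter (sm (I.length + k) (cs_meas n T))) n]
      refine S_congr fun J hJ => ?_
      rw [Set.inter_assoc, ← Set.preimage_inter, cs_inter hJ]
      split_ifs <;> simp
    simp only [this]
    rw [← S_sum, ← S_mul, real_cs, ← S_mul]
    refine S_mono fun J _ => ?_
    by_cases hJ : J ∈ T
    · simp only [hJ, if_true]; exact mix1 I J
    · simp [hJ]
  refine ⟨hμ, ⟨fun B hB hinv => ?_⟩⟩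
  have hinvj : ∀ j, shiftMap^[j] ⁻¹' B = B := by
    intro j
    induction j with
    | zero => simp
    | succ j ih => rw [Function.iterate_succ, Set.preimage_comp, ih, hinv]
  set F' := F * (p + 1) with hF'
  have hF'0 : 0 ≤ F' := by positivity
  have mix3 : ∀ I, μ.real (cyl I) * μ.real B ≤ F' * μ.real (cyl I ∩ B) := by
    intro I
    refine le_of_forall_pos_le_add fun δ hδ => ?_
    obtain ⟨n, T, h⟩ := approx_cs (ρ := μ) hB (ε := δ / (1 + F')) (by positivity)
    set ε := δ / (1 + F') with hε
    have hd : (1 + F') * ε = δ := by rw [hε]; field_simp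
    have hBcs : μ.real B ≤ μ.real (cs n T) + ε := by
      have : B ⊆ cs n T ∪ (cs n T ∆ B) := by
        intro x hx
        by_cases h' : x ∈ cs n T
        · exact Or.inl h'
        · exact Or.inr (Or.inr ⟨hx, h'⟩)
      have := (measureReal_mono (μ := μ) this).trans (measureReal_union_le _ _)
      linarith
    have hk : ∀ k, μ.real (cyl I ∩ shiftMap^[I.length + k] ⁻¹' cs n T) ≤ μ.real (cyl I ∩ B) + ε := by
      intro k
      have : cyl I ∩ shiftMap^[I.length + k] ⁻¹' cs n T ⊆
          (cyl I ∩ B) ∪ shiftMap^[I.length + k] ⁻¹' (cs n T ∆ B) := by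
        rintro x ⟨h1, h2⟩
        by_cases h' : x ∈ B
        · exact Or.inl ⟨h1, h'⟩
        · refine Or.inr (Or.inl ⟨h2, ?_⟩)
          rw [← hinvj (I.length + k)] at h'
          exact h'
      have h3 := (measureReal_mono (μ := μ) this).trans (measureReal_union_le _ _)
      rw [(hμ.iterate (I.length + k)).measureReal_preimage
        ((cs_meas n T).symmDiff hB).nullMeasurableSet] at h3
      linarith
    have h4 := mix2 I n T
    have h5 : F * ∑ k ∈ Finset.range (p + 1), μ.real (cyl I ∩ shiftMap^[I.length + k] ⁻¹' cs n T) ≤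
        F' * (μ.real (cyl I ∩ B) + ε) := by
      rw [hF', mul_assoc]
      refine mul_le_mul_of_nonneg_left ?_ hF
      refine (Finset.sum_le_card_nsmul _ _ _ fun k _ => hk k).trans (le_of_eq ?_)
      simp; ring
    have h6 : μ.real (cyl I) ≤ 1 := measureReal_le_one
    have h7 : 0 ≤ μ.real (cyl I) := measureReal_nonneg
    have h8 : 0 ≤ ε := by positivity
    nlinarith
  have mix4 : ∀ n T, μ.real (cs n T) * μ.real B ≤ F' * μ.real (cs n T ∩ B) := by
    intro n T
    rw [← partition_id ((cs_meas n T).inter hB) n, real_cs, ← S_mul, ← S_mul']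
    refine S_mono fun w hw => ?_
    rw [Set.inter_right_comm, cs_inter hw]
    split_ifs
    · exact mix3 w
    · simp
  have key : μ.real Bᶜ * μ.real B ≤ 0 := by
    refine le_of_forall_pos_le_add fun δ hδ => ?_
    obtain ⟨n, T, h⟩ := approx_cs (ρ := μ) hB.compl (ε := δ / (1 + F')) (by positivity)
    set ε := δ / (1 + F') with hε
    have hd : (1 + F') * ε = δ := by rw [hε]; field_simp
    have h1 : μ.real Bᶜ ≤ μ.real (cs n T) + ε := by
      have : Bᶜ ⊆ cs n T ∪ (cs n T ∆ Bᶜ) := by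
        intro x hx
        by_cases h' : x ∈ cs n T
        · exact Or.inl h'
        · exact Or.inr (Or.inr ⟨hx, h'⟩)
      have := (measureReal_mono (μ := μ) this).trans (measureReal_union_le _ _)
      linarith
    have h2 : μ.real (cs n T ∩ B) ≤ ε := by
      have : cs n T ∩ B ⊆ cs n T ∆ Bᶜ := fun x hx => Or.inl ⟨hx.1, fun h => h hx.2⟩
      exact (measureReal_mono this).trans h.le
    have h3 := mix4 n T
    have h6 : μ.real B ≤ 1 := measureReal_le_one
    have h7 : 0 ≤ μ.real B := measureReal_nonneg
    have h8 : 0 ≤ ε := by positivity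
    nlinarith
  rw [Filter.eventuallyConst_set']
  rcases eq_or_lt_of_le (measureReal_nonneg (μ := μ) (s := B)) with h | h
  · left
    rw [ae_eq_empty]
    exact (measureReal_eq_zero_iff).1 h.symm
  · right
    rw [ae_eq_univ]
    refine (measureReal_eq_zero_iff).1 (le_antisymm ?_ measureReal_nonneg)
    by_contra hc
    nlinarith [not_le.1 hc]

lemma log_ineq {x y : ℝ} (a : ℝ) (ha : 0 < a) (hx : 0 ≤ x) (hy : 0 ≤ y) (h : y ≠ 0 → 0 < x) :
    y * (Real.log x - Real.log y) ≤ a * x - y - Real.log a * y := by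
  rcases eq_or_lt_of_le hy with h0 | h0
  · rw [← h0]; simp; positivity
  · have hx' := h h0.ne'
    have h1 := Real.log_le_sub_one_of_pos (show 0 < a * x / y by positivity)
    rw [Real.log_div (by positivity) h0.ne', Real.log_mul ha.ne' hx'.ne'] at h1
    have h2 := mul_le_mul_of_nonneg_left h1 hy
    have h3 : y * (a * x / y - 1) = a * x - y := by field_simp
    rw [h3] at h2
    linarith

lemma log_ineq_one {x y : ℝ} (hx : 0 ≤ x) (hy : 0 ≤ y) (h : y ≠ 0 → 0 < x) :
    y * (Real.log x - Real.log y) ≤ x - y := by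
  have := log_ineq 1 one_pos hx hy h
  simpa using this

lemma total {μ : Measure (ℕ → A)} [IsProbabilityMeasure μ] (n : ℕ) :
    S n (fun w => μ.real (cyl w)) = 1 := by
  have := real_right (ρ := μ) [] n
  simpa [cyl_nil] using this

lemma ac_of_bound {μ η : Measure (ℕ → A)} [IsProbabilityMeasure μ] [IsProbabilityMeasure η] {C : ℝ}
    (hpos : ∀ I, η.real (cyl I) ≠ 0 → 0 < μ.real (cyl I))
    (hC : ∀ n, 1 ≤ n → -C ≤ S n (fun w => η.real (cyl w) *
      (Real.log (μ.real (cyl w)) - Real.log (η.real (cyl w))))) : η ≪ μ := by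
  refine Measure.AbsolutelyContinuous.mk fun B hB h0 => ?_
  by_contra hne
  have hδ : 0 < η.real B := by
    refine lt_of_le_of_ne measureReal_nonneg fun h => hne ((measureReal_eq_zero_iff).1 h.symm)
  set δ := η.real B with hδd
  set s := 2 * (|C| + 2) / δ with hs
  have hs0 : s * (δ / 2) = |C| + 2 := by rw [hs]; field_simp
  have hs1 : 0 ≤ s := by positivity
  set ε := min (δ / 2) (Real.exp (-s)) with hε
  have hε0 : 0 < ε := lt_min (by positivity) (Real.exp_pos _)
  obtain ⟨n0, T0, hT0⟩ := approx_cs (ρ := μ + η) hB hε0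
  rw [cs_lift (Nat.le_succ n0)] at hT0
  set n := n0 + 1
  generalize {w : List A | w.take n0 ∈ T0} = T at hT0
  have hsum : μ.real (cs n T ∆ B) + η.real (cs n T ∆ B) < ε := by
    rwa [measureReal_add_apply] at hT0
  have m1 : 0 ≤ μ.real (cs n T ∆ B) := measureReal_nonneg
  have m2 : 0 ≤ η.real (cs n T ∆ B) := measureReal_nonneg
  have m3 : μ.real (cs n T) ≤ Real.exp (-s) := by
    have : cs n T ⊆ B ∪ (cs n T ∆ B) := by
      intro x hx
      by_cases h' : x ∈ B
      · exact Or.inl h'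
      · exact Or.inr (Or.inl ⟨hx, h'⟩)
    have h1 := (measureReal_mono (μ := μ) this).trans (measureReal_union_le _ _)
    have h2 : μ.real B = 0 := (measureReal_eq_zero_iff).2 h0
    linarith [min_le_right (δ / 2) (Real.exp (-s))]
  have m4 : δ / 2 ≤ η.real (cs n T) := by
    have : B ⊆ cs n T ∪ (cs n T ∆ B) := by
      intro x hx
      by_cases h' : x ∈ cs n T
      · exact Or.inl h'
      · exact Or.inr (Or.inr ⟨hx, h'⟩)
    have h1 := (measureReal_mono (μ := η) this).trans (measureReal_union_le _ _)
    linarith [min_le_left (δ / 2) (Real.exp (-s))]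
  have h1 := hC n (by omega)
  have h2 : S n (fun w => η.real (cyl w) *
      (Real.log (μ.real (cyl w)) - Real.log (η.real (cyl w)))) ≤
      S n (fun w => ((μ.real (cyl w) - η.real (cyl w)) +
        Real.exp s * (if w ∈ T then μ.real (cyl w) else 0)) -
        s * (if w ∈ T then η.real (cyl w) else 0)) := by
    refine S_mono fun w _ => ?_
    have x0 : 0 ≤ μ.real (cyl w) := measureReal_nonneg
    split_ifs with hw
    · have := log_ineq (Real.exp s) (Real.exp_pos _) x0 measureReal_nonneg (hpos w)
      rw [Real.log_exp] at this
      linarith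
    · have := log_ineq_one x0 measureReal_nonneg (hpos w)
      linarith
  rw [S_minus, S_plus, S_minus, S_mul, S_mul, ← real_cs, ← real_cs, total, total] at h2
  have h3 : Real.exp s * μ.real (cs n T) ≤ 1 := by
    refine (mul_le_mul_of_nonneg_left m3 (Real.exp_pos s).le).trans (le_of_eq ?_)
    rw [← Real.exp_add]; simp
  have h4 : s * (δ / 2) ≤ s * η.real (cs n T) := mul_le_mul_of_nonneg_left m4 hs1
  have h5 := le_abs_self C
  linarith

/-- block entropy -/
noncomputable def H (μ : Measure (ℕ → A)) (n : ℕ) : ℝ :=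
  -S n (fun w => μ.real (cyl w) * Real.log (μ.real (cyl w)))

/-- block energy -/
noncomputable def a (ψ : List A → ℝ) (μ : Measure (ℕ → A)) (n : ℕ) : ℝ :=
  S n (fun w => μ.real (cyl w) * Real.log (ψ w))

lemma real_le_left {μ : Measure (ℕ → A)} [IsProbabilityMeasure μ] (u v : List A) :
    μ.real (cyl (u ++ v)) ≤ μ.real (cyl u) := by
  rw [cyl_append]; exact measureReal_mono Set.inter_subset_left

lemma real_le_right {μ : Measure (ℕ → A)} [IsProbabilityMeasure μ]
    (hμ : MeasurePreserving shiftMap μ μ) (u v : List A) :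
    μ.real (cyl (u ++ v)) ≤ μ.real (cyl v) := by
  rw [cyl_append, ← (hμ.iterate u.length).measureReal_preimage (cyl_meas v).nullMeasurableSet]
  exact measureReal_mono Set.inter_subset_right

lemma sum_left {μ : Measure (ℕ → A)} [IsProbabilityMeasure μ] (f : List A → ℝ) (n m : ℕ) :
    S n (fun u => S m (fun v => μ.real (cyl (u ++ v)) * f u)) = S n (fun u => μ.real (cyl u) * f u) := by
  refine S_congr fun u _ => ?_
  rw [S_mul', real_right]

lemma sum_right {μ : Measure (ℕ → A)} [IsProbabilityMeasure μ]
    (hμ : MeasurePreserving shiftMap μ μ) (f : List A → ℝ) (n m : ℕ) :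
    S n (fun u => S m (fun v => μ.real (cyl (u ++ v)) * f v)) = S m (fun u => μ.real (cyl u) * f u) := by
  rw [S_comm]
  refine S_congr fun u _ => ?_
  rw [S_mul', real_left hμ]

lemma H_sub {μ : Measure (ℕ → A)} [IsProbabilityMeasure μ]
    (hμ : MeasurePreserving shiftMap μ μ) (n m : ℕ) : H μ (n + m) ≤ H μ n + H μ m := by
  unfold H
  have key : S n (fun u => S m (fun v => μ.real (cyl (u ++ v)) * Real.log (μ.real (cyl u)) +
      μ.real (cyl (u ++ v)) * Real.log (μ.real (cyl v)) -
      μ.real (cyl (u ++ v)) * Real.log (μ.real (cyl (u ++ v))))) ≤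
      S n (fun u => S m (fun v => μ.real (cyl u) * μ.real (cyl v) - μ.real (cyl (u ++ v)))) := by
    refine S_mono fun u _ => S_mono fun v _ => ?_
    by_cases h : μ.real (cyl (u ++ v)) = 0
    · rw [h]; simp; positivity
    · have h0 : 0 < μ.real (cyl (u ++ v)) := lt_of_le_of_ne measureReal_nonneg (Ne.symm h)
      have hu := h0.trans_le (real_le_left u v)
      have hv := h0.trans_le (real_le_right hμ u v)
      have := log_ineq_one (x := μ.real (cyl u) * μ.real (cyl v)) (y := μ.real (cyl (u ++ v)))
        (by positivity) h0.le (fun _ => by positivity)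
      rw [Real.log_mul hu.ne' hv.ne'] at this
      linarith
  simp only [S_minus, S_plus] at key
  rw [sum_left, sum_right hμ, ← S_add n m (fun w => μ.real (cyl w) * Real.log (μ.real (cyl w))),
    ← S_add n m (fun w => μ.real (cyl w))] at key
  simp only [S_mul, S_mul', total] at key
  linarith

lemma H_nonneg {μ : Measure (ℕ → A)} [IsProbabilityMeasure μ] (n : ℕ) : 0 ≤ H μ n := by
  unfold H
  rw [neg_nonneg]
  refine Finset.sum_nonpos fun w _ => ?_
  exact mul_nonpos_of_nonneg_of_nonpos measureReal_nonneg
    (Real.log_nonpos measureReal_nonneg measureReal_le_one)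

lemma H_zero {μ : Measure (ℕ → A)} [IsProbabilityMeasure μ] : H μ 0 = 0 := by
  simp [H, S_zero, cyl_nil]

lemma a_sub {p : ℕ} {D : ℝ} {ψ : List A → ℝ} (hψ : Adm p D ψ)
    {μ : Measure (ℕ → A)} [IsProbabilityMeasure μ]
    (hμ : MeasurePreserving shiftMap μ μ) (hpos : ∀ I, μ.real (cyl I) ≠ 0 → 0 < ψ I) (n m : ℕ) :
    a ψ μ (n + m) ≤ a ψ μ n + a ψ μ m + Real.log D := by
  unfold a
  have key : S n (fun u => S m (fun v => μ.real (cyl (u ++ v)) * Real.log (ψ (u ++ v)))) ≤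
      S n (fun u => S m (fun v => μ.real (cyl (u ++ v)) * Real.log (ψ u) +
      μ.real (cyl (u ++ v)) * Real.log (ψ v) + μ.real (cyl (u ++ v)) * Real.log D)) := by
    refine S_mono fun u _ => S_mono fun v _ => ?_
    by_cases h : μ.real (cyl (u ++ v)) = 0
    · rw [h]; simp
    · have h0 : 0 < μ.real (cyl (u ++ v)) := lt_of_le_of_ne measureReal_nonneg (Ne.symm h)
      have hu := hpos u (h0.trans_le (real_le_left u v)).ne'
      have hv := hpos v (h0.trans_le (real_le_right hμ u v)).ne'
      have hD := hψ.D_pos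
      have := Real.log_le_log (hpos _ h) (hψ.sub u v)
      rw [Real.log_mul (by positivity) (by positivity), Real.log_mul (by positivity) (by positivity)] at this
      have := mul_le_mul_of_nonneg_left this h0.le
      linarith
  simp only [S_plus] at key
  rw [sum_left, sum_right hμ, sum_left (fun _ => Real.log D), S_mul', total] at key
  rw [S_add]
  linarith

lemma a_add_H_le {ψ : List A → ℝ} (h0 : ∀ I, 0 ≤ ψ I) {μ : Measure (ℕ → A)} [IsProbabilityMeasure μ]
    (hpos : ∀ I, μ.real (cyl I) ≠ 0 → 0 < ψ I) (n : ℕ) (hZ : 0 < S n ψ) :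
    a ψ μ n + H μ n ≤ Real.log (S n ψ) := by
  have key : S n (fun w => μ.real (cyl w) * Real.log (ψ w) - μ.real (cyl w) * Real.log (S n ψ) -
      μ.real (cyl w) * Real.log (μ.real (cyl w))) ≤
      S n (fun w => ψ w / S n ψ - μ.real (cyl w)) := by
    refine S_mono fun w _ => ?_
    by_cases h : μ.real (cyl w) = 0
    · rw [h]; simp; exact div_nonneg (h0 _) hZ.le
    · have := log_ineq_one (x := ψ w / S n ψ) (y := μ.real (cyl w)) (div_nonneg (h0 _) hZ.le)
        measureReal_nonneg (fun h => div_pos (hpos w h) hZ)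
      rw [Real.log_div (hpos w h).ne' hZ.ne'] at this
      linarith
  simp only [S_minus, S_mul', S_div, total] at key
  rw [div_self hZ.ne'] at key
  unfold a H
  linarith

lemma gibbs_aH {ψ : List A → ℝ} {μ : Measure (ℕ → A)} [IsProbabilityMeasure μ] {P G : ℝ}
    (hG : ∀ I, μ.real (cyl I) ≠ 0 →
      |Real.log (μ.real (cyl I)) - Real.log (ψ I) + I.length * P| ≤ G) (n : ℕ) :
    |-H μ n - a ψ μ n + n * P| ≤ G := by
  have e : -H μ n - a ψ μ n + n * P = S n (fun w => μ.real (cyl w) *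
      (Real.log (μ.real (cyl w)) - Real.log (ψ w) + n * P)) := by
    simp only [mul_add, mul_sub, S_plus, S_minus, S_mul', total]
    unfold H a
    ring
  rw [e]
  have b : ∀ w : List A, w.length = n → |μ.real (cyl w) *
      (Real.log (μ.real (cyl w)) - Real.log (ψ w) + n * P)| ≤ μ.real (cyl w) * G := by
    intro w hw
    rw [abs_mul, abs_of_nonneg (measureReal_nonneg (μ := μ))]
    by_cases h : μ.real (cyl w) = 0
    · simp [h]
    · refine mul_le_mul_of_nonneg_left ?_ measureReal_nonneg
      have := hG w h
      rwa [hw] at this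
  have t : S n (fun w => μ.real (cyl w) * G) = G := by rw [S_mul', total, one_mul]
  have t' : S n (fun w => μ.real (cyl w) * (-G)) = -G := by rw [S_mul', total, one_mul]
  rw [abs_le]
  constructor
  · rw [← t']
    exact S_mono fun w hw => by have := (abs_le.1 (b w hw)).1; linarith
  · conv_rhs => rw [← t]
    exact S_mono fun w hw => (abs_le.1 (b w hw)).2

lemma asymp {p : ℕ} {D : ℝ} {ψ : List A → ℝ} (hψ : Adm p D ψ)
    {μ : Measure (ℕ → A)} [IsProbabilityMeasure μ]
    (hμ : MeasurePreserving shiftMap μ μ) (hpos : ∀ I, μ.real (cyl I) ≠ 0 → 0 < ψ I) {P G : ℝ}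
    (hG : ∀ I, μ.real (cyl I) ≠ 0 →
      |Real.log (μ.real (cyl I)) - Real.log (ψ I) + I.length * P| ≤ G) :
    ∃ L C : ℝ, Tendsto (fun n : ℕ => a ψ μ n / n) atTop (𝓝 L) ∧
      Tendsto (fun n : ℕ => H μ n / n) atTop (𝓝 (P - L)) ∧
      (∀ n : ℕ, |a ψ μ n - n * L| ≤ C) ∧ (∀ n : ℕ, |H μ n - n * (P - L)| ≤ C) := by
  have g := gibbs_aH hG
  have G0 : 0 ≤ G := (abs_nonneg _).trans (g 0)
  have lD : 0 ≤ Real.log D := Real.log_nonneg hψ.one_le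
  obtain ⟨L, h1, h2⟩ := quasi_additive (a ψ μ) (Real.log D + 3 * G) (by
    intro n m
    have e1 := a_sub hψ hμ hpos n m
    have e2 := H_sub hμ n m
    have e3 := abs_le.1 (g n)
    have e4 := abs_le.1 (g m)
    have e5 := abs_le.1 (g (n + m))
    push_cast at e5
    rw [abs_le]
    constructor <;> linarith)
  have h3 : ∀ n : ℕ, |H μ n - n * (P - L)| ≤ Real.log D + 4 * G := by
    intro n
    have e3 := abs_le.1 (g n)
    have e4 := abs_le.1 (h2 n)
    rw [abs_le]
    constructor <;> linarith
  refine ⟨L, Real.log D + 4 * G, h1, ?_, fun n => (h2 n).trans (by linarith), h3⟩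
  have t0 : Tendsto (fun n : ℕ => (Real.log D + 4 * G) / (n:ℝ)) atTop (𝓝 0) :=
    tendsto_const_nhds.div_atTop tendsto_natCast_atTop_atTop
  rw [tendsto_iff_norm_sub_tendsto_zero]
  refine squeeze_zero' (Eventually.of_forall fun _ => norm_nonneg _) ?_ t0
  filter_upwards [eventually_ge_atTop 1] with n hn
  have hn' : (0:ℝ) < n := by exact_mod_cast hn
  rw [Real.norm_eq_abs, show H μ n / n - (P - L) = (H μ n - n * (P - L)) / n by field_simp,
    abs_div, Nat.abs_cast]
  gcongr
  exact h3 n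

end erg
end Gb

namespace Gb

section fin
variable {A : Type} [Fintype A] [TopologicalSpace A] [DiscreteTopology A] [MeasurableSpace A]
  [BorelSpace A]

lemma lint_word (η : Measure (ℕ → A)) (n : ℕ) (F : List A → ℝ≥0∞) :
    ∫⁻ x, F (wordOf x n) ∂η = ∑ w : Fin n → A, F (List.ofFn w) * η (cyl (List.ofFn w)) := by
  have h : ∀ x : ℕ → A, F (wordOf x n) =
      ∑ w : Fin n → A, (cyl (List.ofFn w)).indicator (fun _ => F (List.ofFn w)) x := by
    intro x
    rw [Finset.sum_eq_single (fun i : Fin n => x i)]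
    · rw [Set.indicator_of_mem]
      · rfl
      · rw [mem_cyl' (List.length_ofFn)]; rfl
    · intro w _ hw
      rw [Set.indicator_of_notMem]
      rw [mem_cyl' (List.length_ofFn)]
      intro h
      exact hw (List.ofFn_injective h).symm
    · simp
  simp_rw [h]
  rw [lintegral_finsetSum]
  · refine Finset.sum_congr rfl fun w _ => ?_
    rw [lintegral_indicator_const (cyl_meas _)]
  · intro w _
    exact measurable_const.indicator (cyl_meas _)

lemma intlog_bot {η : Measure (ℕ → A)} [IsProbabilityMeasure η] {φ : List A → ℝ} {n : ℕ}
    (w : Fin n → A) (hw : η.real (cyl (List.ofFn w)) ≠ 0) (h : φ (List.ofFn w) ≤ 0) :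
    intlog η (genPot φ n) = ⊥ := by
  unfold intlog genPot
  have e := lint_word η n (fun I => if φ I ≤ 0 then (⊤ : ℝ≥0∞) else ENNReal.ofReal (-Real.log (φ I)))
  have e2 : ∑ w : Fin n → A, (if φ (List.ofFn w) ≤ 0 then (⊤ : ℝ≥0∞) else
      ENNReal.ofReal (-Real.log (φ (List.ofFn w)))) * η (cyl (List.ofFn w)) = ⊤ := by
    rw [ENNReal.sum_eq_top]
    refine ⟨w, Finset.mem_univ _, ?_⟩
    rw [if_pos h]
    refine ENNReal.top_mul ?_
    intro h0
    exact hw (by simp [Measure.real, h0])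
  rw [e, e2]
  simp

lemma intlog_eq {η : Measure (ℕ → A)} [IsProbabilityMeasure η] {φ : List A → ℝ} {n : ℕ}
    (h : ∀ w : Fin n → A, η.real (cyl (List.ofFn w)) ≠ 0 → 0 < φ (List.ofFn w)) :
    intlog η (genPot φ n) = ((S n (fun I => η.real (cyl I) * Real.log (φ I)) : ℝ) : EReal) := by
  unfold intlog genPot
  have e := lint_word η n (fun I => if φ I ≤ 0 then (⊤ : ℝ≥0∞) else ENNReal.ofReal (-Real.log (φ I)))
  have e1 := lint_word η n (fun I => ENNReal.ofReal (Real.log (φ I)))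
  rw [e, e1]
  have c : ∀ w : Fin n → A, η (cyl (List.ofFn w)) = ENNReal.ofReal (η.real (cyl (List.ofFn w))) :=
    fun w => by simp [Measure.real]
  have e2 : ∑ w : Fin n → A, (if φ (List.ofFn w) ≤ 0 then (⊤ : ℝ≥0∞) else
      ENNReal.ofReal (-Real.log (φ (List.ofFn w)))) * η (cyl (List.ofFn w)) =
      ENNReal.ofReal (∑ w : Fin n → A, max (-Real.log (φ (List.ofFn w))) 0 *
        η.real (cyl (List.ofFn w))) := by
    rw [ENNReal.ofReal_sum_of_nonneg fun w _ => mul_nonneg (le_max_right _ _) measureReal_nonneg]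
    refine Finset.sum_congr rfl fun w _ => ?_
    rw [ENNReal.ofReal_mul (le_max_right _ _), c w]
    by_cases h0 : η.real (cyl (List.ofFn w)) = 0
    · rw [h0]; simp
    · rw [if_neg (not_le.2 (h w h0))]
      simp
  have e3 : ∑ w : Fin n → A, ENNReal.ofReal (Real.log (φ (List.ofFn w))) * η (cyl (List.ofFn w)) =
      ENNReal.ofReal (∑ w : Fin n → A, max (Real.log (φ (List.ofFn w))) 0 *
        η.real (cyl (List.ofFn w))) := by
    rw [ENNReal.ofReal_sum_of_nonneg fun w _ => mul_nonneg (le_max_right _ _) measureReal_nonneg]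
    refine Finset.sum_congr rfl fun w _ => ?_
    rw [ENNReal.ofReal_mul (le_max_right _ _), c w]
    simp
  rw [e2, e3, EReal.coe_ennreal_ofReal, EReal.coe_ennreal_ofReal,
    max_eq_left (Finset.sum_nonneg fun w _ => mul_nonneg (le_max_right _ _) measureReal_nonneg),
    max_eq_left (Finset.sum_nonneg fun w _ => mul_nonneg (le_max_right _ _) measureReal_nonneg),
    ← EReal.coe_sub, ← Finset.sum_sub_distrib]
  congr 1
  refine Finset.sum_congr rfl fun w _ => ?_
  rcases le_total 0 (Real.log (φ (List.ofFn w))) with h1 | h1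
  · rw [max_eq_left h1, max_eq_right (by linarith)]; ring
  · rw [max_eq_right h1, max_eq_left (by linarith)]; ring

/-- the restricted word function -/
noncomputable def rs (X : Set (ℕ → A)) (φ : List A → ℝ) : List A → ℝ :=
  fun I => if Lang X I then φ I else 0

lemma shift_iter_mem {X : Set (ℕ → A)} (hX : IsSubshift X) (n : ℕ) {x : ℕ → A} (hx : x ∈ X) :
    shiftMap^[n] x ∈ X := by
  induction n with
  | zero => simpa
  | succ n ih =>
    rw [Function.iterate_succ_apply']
    exact hX.2.2 ⟨_, ih, rfl⟩

lemma lang_left {X : Set (ℕ → A)} {I J : List A} (h : Lang X (I ++ J)) : Lang X I := by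
  obtain ⟨x, hx, h2⟩ := h
  rw [cyl_append] at hx
  exact ⟨x, hx.1, h2⟩

lemma lang_right {X : Set (ℕ → A)} (hX : IsSubshift X) {I J : List A} (h : Lang X (I ++ J)) :
    Lang X J := by
  obtain ⟨x, hx, h2⟩ := h
  rw [cyl_append] at hx
  exact ⟨_, hx.2, shift_iter_mem hX _ h2⟩

lemma rs_nonneg {X : Set (ℕ → A)} {p : ℕ} {φ : List A → ℝ} (hφ : Dw X p φ) (I : List A) :
    0 ≤ rs X φ I := by
  unfold rs
  split_ifs with h
  · exact hφ.1 I h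
  · exact le_rfl

lemma adm_rs {X : Set (ℕ → A)} (hX : IsSubshift X) {p : ℕ} {φ : List A → ℝ} (hφ : Dw X p φ) :
    ∃ D, Adm p D (rs X φ) := by
  have hn := rs_nonneg hφ
  obtain ⟨h0, ⟨I, hI, hI1, hI2⟩, c, hc, hc1, hsub, hsup⟩ := hφ
  have hci : 0 < c⁻¹ := inv_pos.2 hc
  refine ⟨c⁻¹, (one_le_inv₀ hc).2 hc1, hn, ⟨I, hI1, by simpa [rs, hI]⟩, ?_, ?_⟩
  · intro I J
    by_cases h : Lang X (I ++ J)
    · simp only [rs, if_pos h, if_pos (lang_left h), if_pos (lang_right hX h)]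
      exact hsub I J h
    · have : rs X φ (I ++ J) = 0 := by simp [rs, h]
      rw [this]
      have := hn I
      have := hn J
      positivity
  · intro I J
    by_cases h : Lang X I ∧ Lang X J
    · obtain ⟨K, hK, hK1, hK2⟩ := hsup I J h.1 h.2
      refine ⟨K, hK, ?_⟩
      simp only [rs, if_pos h.1, if_pos h.2, if_pos hK1]
      rw [le_inv_mul_iff₀ hc]
      exact hK2
    · refine ⟨[], by simp, ?_⟩
      have : rs X φ I * rs X φ J = 0 := by
        rw [not_and_or] at h
        rcases h with h | h <;> simp [rs, h]
      rw [this]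
      have := hn (I ++ [] ++ J)
      positivity

lemma compl_null {X : Set (ℕ → A)} (hX : IsSubshift X) {μ : Measure (ℕ → A)} [IsProbabilityMeasure μ]
    (h : ∀ I, ¬ Lang X I → μ.real (cyl I) = 0) : μ X = 1 := by
  have hc : IsClosed X := hX.2.1.isClosed
  have hsub : Xᶜ ⊆ ⋃ I : {I : List A // ¬ Lang X I}, cyl I.1 := by
    intro x hx
    by_contra hcon
    apply hx
    have hl : ∀ n, Lang X (wordOf x n) := by
      intro n
      by_contra hL
      exact hcon (Set.mem_iUnion.2 ⟨⟨_, hL⟩, (mem_cyl' (wordOf_length x n)).2 rfl⟩)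
    choose y hy hyX using hl
    refine hc.mem_of_tendsto (f := y) (b := atTop) ?_ (Eventually.of_forall hyX)
    rw [tendsto_pi_nhds]
    intro i
    refine tendsto_const_nhds.congr' ?_
    filter_upwards [eventually_gt_atTop i] with n hn
    have := (mem_cyl' (wordOf_length x n)).1 (hy n)
    have := congrFun (List.ofFn_injective this) ⟨i, hn⟩
    exact this.symm
  have h0 : μ Xᶜ = 0 := by
    refine measure_mono_null hsub (measure_iUnion_null fun I => ?_)
    exact (measureReal_eq_zero_iff).1 (h I.1 I.2)
  rw [← prob_compl_eq_zero_iff hc.measurableSet]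
  exact h0

lemma mw_eq {X : Set (ℕ → A)} (hX : IsSubshift X) {μ : Measure (ℕ → A)} [IsProbabilityMeasure μ]
    (h : μ X = 1) (I : List A) : mw X μ I = μ.real (cyl I) := by
  have h0 : μ Xᶜ = 0 := (prob_compl_eq_zero_iff hX.2.1.isClosed.measurableSet).2 h
  unfold mw Measure.real
  congr 1
  exact measure_inter_conull h0

lemma real_not_lang {X : Set (ℕ → A)} (hX : IsSubshift X) {μ : Measure (ℕ → A)}
    [IsProbabilityMeasure μ] (h : μ X = 1) {I : List A} (hI : μ.real (cyl I) ≠ 0) : Lang X I := by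
  by_contra hL
  rw [← mw_eq hX h] at hI
  apply hI
  have : cyl I ∩ X = ∅ := Set.not_nonempty_iff_eq_empty.1 hL
  simp [mw, this]

lemma Hblock_eq {X : Set (ℕ → A)} (hX : IsSubshift X) {μ : Measure (ℕ → A)} [IsProbabilityMeasure μ]
    (h : μ X = 1) (n : ℕ) : Hblock X μ n = H μ n := by
  simp only [Hblock, H, S, mw_eq hX h]

lemma a_eq {X : Set (ℕ → A)} (hX : IsSubshift X) {μ : Measure (ℕ → A)} [IsProbabilityMeasure μ]
    (h : μ X = 1) (φ : List A → ℝ) (n : ℕ) :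
    S n (fun I => μ.real (cyl I) * Real.log (φ I)) = a (rs X φ) μ n := by
  unfold a
  refine S_congr fun w _ => ?_
  by_cases h0 : μ.real (cyl w) = 0
  · simp [h0]
  · simp [rs, real_not_lang hX h h0]

lemma ent_le {X : Set (ℕ → A)} (hX : IsSubshift X) {μ : Measure (ℕ → A)} [IsProbabilityMeasure μ]
    (hμ : MeasurePreserving shiftMap μ μ) (h : μ X = 1) {n : ℕ} (hn : 1 ≤ n) :
    ent X μ ≤ H μ n / n := by
  unfold ent
  simp only [Hblock_eq hX h]
  have hk : ∀ k : ℕ, H μ (k * n) ≤ k * H μ n := by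
    intro k
    induction k with
    | zero => simp [H_zero]
    | succ k ih =>
      rw [add_mul, one_mul]
      have := H_sub hμ (k * n) n
      push_cast; linarith
  have hn' : (0:ℝ) < n := by exact_mod_cast hn
  refine liminf_le_of_frequently_le ?_ ?_
  · rw [frequently_atTop]
    intro b
    refine ⟨(b + 1) * n, by nlinarith, ?_⟩
    have hb : (0:ℝ) < (b + 1 : ℕ) := by positivity
    rw [Nat.cast_mul, div_le_div_iff₀ (by positivity) hn']
    have := hk (b + 1)
    nlinarith
  · exact isBoundedUnder_of ⟨0, fun m => div_nonneg (H_nonneg m) (Nat.cast_nonneg m)⟩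

lemma phiStar_pos {X : Set (ℕ → A)} (hX : IsSubshift X) {p : ℕ} {D : ℝ} {φ : List A → ℝ}
    (hψ : Adm p D (rs X φ)) {η : Measure (ℕ → A)} [IsProbabilityMeasure η] (h : η X = 1)
    (hb : PhiStar η (genPot φ) ≠ ⊥) : ∀ I, η.real (cyl I) ≠ 0 → 0 < rs X φ I := by
  intro I hI
  by_contra hneg
  have hz : rs X φ I = 0 := le_antisymm (not_lt.1 hneg) (hψ.nonneg I)
  apply hb
  unfold PhiStar
  have hev : ∀ᶠ n : ℕ in atTop, (((n : ℝ)⁻¹ : ℝ) : EReal) * intlog η (genPot φ n) = ⊥ := by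
    filter_upwards [eventually_ge_atTop (I.length + 1)] with n hn
    have hex : ∃ v : Fin (n - I.length) → A, η.real (cyl (I ++ List.ofFn v)) ≠ 0 := by
      by_contra hcon
      push Not at hcon
      apply hI
      rw [← real_right I (n - I.length)]
      exact Finset.sum_eq_zero fun v _ => hcon v
    obtain ⟨v, hv⟩ := hex
    have hlen : (I ++ List.ofFn v).length = n := by simp; omega
    obtain ⟨w, hw⟩ : ∃ w : Fin n → A, List.ofFn w = I ++ List.ofFn v := by
      refine ⟨fun i => (I ++ List.ofFn v).get (i.cast hlen.symm), ?_⟩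
      apply List.ext_getElem
      · simp; omega
      · intro i _ _; simp
    rw [← hw] at hv
    rw [intlog_bot w hv]
    · apply EReal.coe_mul_bot_of_pos
      have : (0:ℝ) < n := by exact_mod_cast (by omega : 0 < n)
      positivity
    · have h1 : φ (List.ofFn w) = rs X φ (List.ofFn w) := by
        simp [rs, real_not_lang hX h hv]
      rw [h1, hw]
      have := hψ.sub I (List.ofFn v)
      rw [hz] at this
      linarith
  rw [liminf_congr hev]
  simp

lemma intlog_a {X : Set (ℕ → A)} (hX : IsSubshift X) {φ : List A → ℝ}
    {η : Measure (ℕ → A)} [IsProbabilityMeasure η] (h : η X = 1)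
    (hpos : ∀ I, η.real (cyl I) ≠ 0 → 0 < rs X φ I) (n : ℕ) :
    intlog η (genPot φ n) = ((a (rs X φ) η n : ℝ) : EReal) := by
  rw [intlog_eq, a_eq hX h]
  intro w hw
  have := hpos _ hw
  simpa [rs, real_not_lang hX h hw] using this

lemma phiStar_le {X : Set (ℕ → A)} (hX : IsSubshift X) {p : ℕ} {D : ℝ} {φ : List A → ℝ}
    (hψ : Adm p D (rs X φ)) {η : Measure (ℕ → A)} [IsProbabilityMeasure η] (h : η X = 1)
    (hη : MeasurePreserving shiftMap η η)
    (hpos : ∀ I, η.real (cyl I) ≠ 0 → 0 < rs X φ I) {n : ℕ} (hn : 1 ≤ n) :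
    PhiStar η (genPot φ) ≤ (((a (rs X φ) η n + Real.log D) / n : ℝ) : EReal) := by
  unfold PhiStar
  simp only [intlog_a hX h hpos]
  have hk : ∀ k : ℕ, a (rs X φ) η ((k + 1) * n) ≤ (k + 1 : ℕ) * (a (rs X φ) η n + Real.log D) := by
    intro k
    have hD : 0 ≤ Real.log D := Real.log_nonneg hψ.one_le
    induction k with
    | zero => simp; linarith
    | succ k ih =>
      rw [add_mul (k + 1) 1, one_mul]
      have := a_sub hψ hη hpos ((k + 1) * n) n
      push_cast at ih ⊢; linarith
  have hn' : (0:ℝ) < n := by exact_mod_cast hn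
  refine liminf_le_of_frequently_le ?_
  rw [frequently_atTop]
  intro b
  refine ⟨(b + 1) * n, by nlinarith, ?_⟩
  have hb : (0:ℝ) < (b + 1 : ℕ) := by positivity
  rw [← EReal.coe_mul, EReal.coe_le_coe_iff, inv_mul_eq_div, Nat.cast_mul,
    div_le_div_iff₀ (by positivity) hn']
  have := hk b
  nlinarith

/-- upper bound of the pressure value by finite blocks -/
lemma eqVal_le {X : Set (ℕ → A)} (hX : IsSubshift X) {p : ℕ} {D : ℝ} {φ : List A → ℝ}
    (hψ : Adm p D (rs X φ)) {η : ProbabilityMeasure (ℕ → A)} (h : η ∈ MInv X)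
    (hb : PhiStar (η : Measure (ℕ → A)) (genPot φ) ≠ ⊥) :
    (∀ I, (η : Measure (ℕ → A)).real (cyl I) ≠ 0 → 0 < rs X φ I) ∧
    ∀ n : ℕ, 1 ≤ n → eqVal X (genPot φ) η ≤
      (((a (rs X φ) η n + H (η : Measure (ℕ → A)) n + Real.log D) / n : ℝ) : EReal) := by
  have hη : MeasurePreserving shiftMap (η : Measure (ℕ → A)) (η : Measure (ℕ → A)) :=
    ⟨shift_meas, h.1⟩
  have hpos := phiStar_pos hX hψ h.2 hb
  refine ⟨hpos, fun n hn => ?_⟩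
  unfold eqVal
  refine (add_le_add (phiStar_le hX hψ h.2 hη hpos hn)
    (EReal.coe_le_coe_iff.2 (ent_le hX hη h.2 hn))).trans ?_
  rw [← EReal.coe_add, EReal.coe_le_coe_iff]
  apply le_of_eq
  ring

lemma eqVal_le_P {X : Set (ℕ → A)} (hX : IsSubshift X) {p : ℕ} {D : ℝ} {φ : List A → ℝ}
    (hψ : Adm p D (rs X φ)) {P C : ℝ} (hC : ∀ n : ℕ, |Real.log (S n (rs X φ)) - n * P| ≤ C)
    {η : ProbabilityMeasure (ℕ → A)} (h : η ∈ MInv X) : eqVal X (genPot φ) η ≤ (P : EReal) := by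
  by_cases hb : PhiStar (η : Measure (ℕ → A)) (genPot φ) = ⊥
  · unfold eqVal; rw [hb]; simp
  obtain ⟨hpos, hle⟩ := eqVal_le hX hψ h hb
  have hb2 : ∀ n : ℕ, 1 ≤ n → eqVal X (genPot φ) η ≤ ((P + (C + Real.log D) / n : ℝ) : EReal) := by
    intro n hn
    refine (hle n hn).trans ?_
    rw [EReal.coe_le_coe_iff]
    have hn' : (0:ℝ) < n := by exact_mod_cast hn
    have h1 := a_add_H_le hψ.nonneg hpos n (hψ.Z_pos n)
    have h2 := (abs_le.1 (hC n)).2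
    rw [div_le_iff₀ hn', add_mul, div_mul_cancel₀ _ hn'.ne']
    linarith
  have hlim : Tendsto (fun n : ℕ => ((P + (C + Real.log D) / n : ℝ) : EReal)) atTop (𝓝 (P : EReal)) := by
    rw [EReal.tendsto_coe]
    have := (tendsto_const_div_atTop_nhds_zero_nat (C + Real.log D)).const_add P
    simpa using this
  exact ge_of_tendsto hlim ((eventually_ge_atTop 1).mono hb2)

end fin
end Gb

/-- Theorem 5.5 / `thm-3.1`: a potential generated by `φ ∈ D_w(X,p)` has a
unique equilibrium state `μ`; `μ` is ergodic, has the Gibbs property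
`μ(I) ≍ e^{−nP} φ(I)` with `P = lim (1/n) log Σ_{J ∈ L_n(X)} φ(J)`, and satisfies
`Σ μ(I) log φ(I) = n Φ_*(μ) + O(1)`, `Σ μ(I) log μ(I) = −n h_μ(σ_X) + O(1)`. -/
theorem weighted_eq_states_stmt_15 {A : Type} [Fintype A] [TopologicalSpace A]
    [DiscreteTopology A] [MeasurableSpace A] [BorelSpace A]
    (X : Set (ℕ → A)) (hX : IsSubshift X)
    (p : ℕ) (φ : List A → ℝ) (hφ : Dw X p φ) :
    ∃ μ : ProbabilityMeasure (ℕ → A),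
      EqSet X (genPot φ) = {μ} ∧
      Ergodic shiftMap (μ : Measure (ℕ → A)) ∧
      ∃ P : ℝ,
        Tendsto (fun n : ℕ =>
            Real.log (∑ w : Fin n → A,
              if Lang X (List.ofFn w) then φ (List.ofFn w) else 0) / n)
          atTop (nhds P) ∧
        (∃ c > (0:ℝ), ∀ n : ℕ, 1 ≤ n → ∀ w : Fin n → A, Lang X (List.ofFn w) →
          c⁻¹ * (Real.exp (-(n * P)) * φ (List.ofFn w)) ≤
              mw X (μ : Measure (ℕ → A)) (List.ofFn w) ∧
            mw X (μ : Measure (ℕ → A)) (List.ofFn w) ≤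
              c * (Real.exp (-(n * P)) * φ (List.ofFn w))) ∧
        (∃ Pst : ℝ, PhiStar (μ : Measure (ℕ → A)) (genPot φ) = ((Pst : ℝ) : EReal) ∧
          ∃ c' : ℝ, ∀ n : ℕ, 1 ≤ n →
            |(∑ w : Fin n → A, mw X (μ : Measure (ℕ → A)) (List.ofFn w) *
                Real.log (φ (List.ofFn w))) - n * Pst| ≤ c' ∧
            |(∑ w : Fin n → A, mw X (μ : Measure (ℕ → A)) (List.ofFn w) *
                Real.log (mw X (μ : Measure (ℕ → A)) (List.ofFn w))) +
              n * ent X (μ : Measure (ℕ → A))| ≤ c') := by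
  obtain ⟨D, hψ⟩ := Gb.adm_rs hX hφ
  obtain ⟨P, C, hP, hC⟩ := hψ.exists_P
  obtain ⟨E, hE⟩ := hψ.normalise hC
  obtain ⟨m, m1, m0, mr, ml, mlo, mup⟩ := hE.exists_m
  have : Nonempty A := by
    obtain ⟨x, _⟩ := hX.1
    exact ⟨x 0⟩
  obtain ⟨μ, hμm, hμp⟩ := Gb.exists_inv_measure m1 m0 mr ml
  have hE0 : 0 < E := hE.E_pos
  simp only [← hμm] at mlo mup
  have hlo : ∀ I, Real.exp (-(I.length * P)) * Gb.rs X φ I ≤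
      E ^ 3 * (μ : Measure (ℕ → A)).real (cyl I) := mlo
  have hup : ∀ I, (μ : Measure (ℕ → A)).real (cyl I) ≤
      E ^ 3 * (Real.exp (-(I.length * P)) * Gb.rs X φ I) := mup
  have hμX : (μ : Measure (ℕ → A)) X = 1 := by
    refine Gb.compl_null hX fun I hI => le_antisymm ?_ measureReal_nonneg
    have := hup I
    simpa [Gb.rs, hI] using this
  have hμI : μ ∈ MInv X := ⟨hμp.map_eq, hμX⟩
  have hpos : ∀ I, (μ : Measure (ℕ → A)).real (cyl I) ≠ 0 → 0 < Gb.rs X φ I := by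
    intro I hI
    refine lt_of_le_of_ne (hψ.nonneg I) fun h => hI (le_antisymm ?_ measureReal_nonneg)
    have := hup I
    simpa [← h] using this
  have hlow : ∀ I, 0 < Gb.rs X φ I → 0 < (μ : Measure (ℕ → A)).real (cyl I) ∧
      -(I.length * P) + Real.log (Gb.rs X φ I) ≤
        Real.log (E ^ 3) + Real.log ((μ : Measure (ℕ → A)).real (cyl I)) := by
    intro I hI
    have h1 : 0 < Real.exp (-(I.length * P)) * Gb.rs X φ I := by positivity
    have h2 : 0 < (μ : Measure (ℕ → A)).real (cyl I) := by
      have := h1.trans_le (hlo I)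
      exact (pos_iff_pos_of_mul_pos this).1 (by positivity)
    refine ⟨h2, ?_⟩
    have := Real.log_le_log h1 (hlo I)
    rwa [Real.log_mul (by positivity) hI.ne', Real.log_exp, Real.log_mul (by positivity) h2.ne'] at this
  have hG : ∀ I, (μ : Measure (ℕ → A)).real (cyl I) ≠ 0 →
      |Real.log ((μ : Measure (ℕ → A)).real (cyl I)) - Real.log (Gb.rs X φ I) + I.length * P| ≤
        Real.log (E ^ 3) := by
    intro I hI
    have hr := hpos I hI
    obtain ⟨h2, h3⟩ := hlow I hr
    have := Real.log_le_log h2 (hup I)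
    rw [Real.log_mul (by positivity) (by positivity), Real.log_mul (by positivity) hr.ne',
      Real.log_exp] at this
    rw [abs_le]
    constructor <;> linarith
  have herg : Ergodic shiftMap (μ : Measure (ℕ → A)) := by
    refine Gb.ergodic_of_mix hμp (p := p) (F := E ^ 10) (by positivity) fun I J => ?_
    have hmix : (Real.exp (-(I.length * P)) * Gb.rs X φ I) *
        (Real.exp (-(J.length * P)) * Gb.rs X φ J) ≤ E * ∑ k ∈ Finset.range (p + 1), Gb.S k (fun K =>
        Real.exp (-((I ++ K ++ J).length * P)) * Gb.rs X φ (I ++ K ++ J)) := hE.mix I J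
    have hI := hE.nonneg I
    set T := ∑ k ∈ Finset.range (p + 1), Gb.S k (fun K =>
        Real.exp (-((I ++ K ++ J).length * P)) * Gb.rs X φ (I ++ K ++ J)) with hT
    set T2 := ∑ k ∈ Finset.range (p + 1), Gb.S k (fun K =>
          (μ : Measure (ℕ → A)).real (cyl (I ++ K ++ J))) with hT2
    have hsum : T ≤ E ^ 3 * T2 := by
      rw [hT, hT2, Finset.mul_sum]
      refine Finset.sum_le_sum fun k _ => ?_
      rw [← Gb.S_mul]
      exact Gb.S_mono fun K _ => hlo _
    calc _ ≤ (E ^ 3 * (Real.exp (-(I.length * P)) * Gb.rs X φ I)) *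
          (E ^ 3 * (Real.exp (-(J.length * P)) * Gb.rs X φ J)) :=
          mul_le_mul (hup I) (hup J) measureReal_nonneg
            (mul_nonneg (by positivity) hI)
      _ = E ^ 6 * ((Real.exp (-(I.length * P)) * Gb.rs X φ I) *
          (Real.exp (-(J.length * P)) * Gb.rs X φ J)) := by ring
      _ ≤ E ^ 6 * (E * T) := mul_le_mul_of_nonneg_left hmix (by positivity)
      _ ≤ E ^ 6 * (E * (E ^ 3 * T2)) :=
          mul_le_mul_of_nonneg_left (mul_le_mul_of_nonneg_left hsum hE0.le) (by positivity)
      _ = _ := by ring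
  obtain ⟨L, C', hL, hH, haL, hHL⟩ := Gb.asymp hψ hμp hpos hG
  have hPhi : PhiStar (μ : Measure (ℕ → A)) (genPot φ) = ((L : ℝ) : EReal) := by
    unfold PhiStar
    simp only [Gb.intlog_a hX hμX hpos, ← EReal.coe_mul, inv_mul_eq_div]
    exact (EReal.tendsto_coe.2 hL).liminf_eq
  have hent : ent X (μ : Measure (ℕ → A)) = P - L := by
    unfold ent
    simp only [Gb.Hblock_eq hX hμX]
    exact hH.liminf_eq
  have hval : eqVal X (genPot φ) μ = (P : EReal) := by
    unfold eqVal
    rw [hPhi, hent, ← EReal.coe_add]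
    congr 1
    ring
  have hsup : (⨆ η ∈ MInv X, eqVal X (genPot φ) η) = (P : EReal) := by
    apply le_antisymm
    · exact iSup₂_le fun η hη => Gb.eqVal_le_P hX hψ hC hη
    · rw [← hval]
      exact le_iSup₂_of_le μ hμI le_rfl
  refine ⟨μ, ?_, herg, P, hP, ⟨E ^ 3, by positivity, ?_⟩, L, hPhi, C', ?_⟩
  · ext η
    rw [Set.mem_singleton_iff]
    constructor
    swap
    · rintro rfl
      exact ⟨hμI, hval.trans hsup.symm⟩
    rintro ⟨hη, hηv⟩
    rw [hsup] at hηv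
    have hb : PhiStar (η : Measure (ℕ → A)) (genPot φ) ≠ ⊥ := by
      intro hb
      unfold eqVal at hηv
      rw [hb, EReal.bot_add] at hηv
      exact EReal.bot_ne_coe P hηv
    obtain ⟨hpη, hle⟩ := Gb.eqVal_le hX hψ hη hb
    have hac : (η : Measure (ℕ → A)) ≪ (μ : Measure (ℕ → A)) := by
      refine Gb.ac_of_bound (C := Real.log D + Real.log (E ^ 3))
        (fun I hI => (hlow I (hpη I hI)).1) fun n hn => ?_
      have h1 := hle n hn
      have hn' : (0:ℝ) < n := by exact_mod_cast hn
      rw [hηv, EReal.coe_le_coe_iff, le_div_iff₀ hn'] at h1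
      have h2 : Gb.S n (fun w => (η : Measure (ℕ → A)).real (cyl w) * Real.log (Gb.rs X φ w) -
          (η : Measure (ℕ → A)).real (cyl w) * Real.log ((η : Measure (ℕ → A)).real (cyl w)) -
          (n * P + Real.log (E ^ 3)) * (η : Measure (ℕ → A)).real (cyl w)) ≤
          Gb.S n (fun w => (η : Measure (ℕ → A)).real (cyl w) *
            (Real.log ((μ : Measure (ℕ → A)).real (cyl w)) -
              Real.log ((η : Measure (ℕ → A)).real (cyl w)))) := by
        refine Gb.S_mono fun w hw => ?_
        by_cases h0 : (η : Measure (ℕ → A)).real (cyl w) = 0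
        · simp [h0]
        · have h3 := (hlow w (hpη w h0)).2
          rw [hw] at h3
          have h4 : 0 ≤ (η : Measure (ℕ → A)).real (cyl w) := measureReal_nonneg
          nlinarith [mul_le_mul_of_nonneg_left h3 h4]
      rw [Gb.S_minus, Gb.S_minus, Gb.S_mul] at h2
      have h5 : Gb.S n (fun w => (η : Measure (ℕ → A)).real (cyl w)) = 1 := Gb.total n
      rw [h5] at h2
      have h6 : Gb.H (η : Measure (ℕ → A)) n = -Gb.S n (fun w => (η : Measure (ℕ → A)).real (cyl w) *
        Real.log ((η : Measure (ℕ → A)).real (cyl w))) := rfl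
      have h7 : Gb.a (Gb.rs X φ) (η : Measure (ℕ → A)) n =
        Gb.S n (fun w => (η : Measure (ℕ → A)).real (cyl w) * Real.log (Gb.rs X φ w)) := rfl
      linarith
    have heq := herg.eq_of_absolutelyContinuous ⟨Gb.shift_meas, hη.1⟩ hac
    exact Subtype.ext heq
  · intro n hn w hw
    rw [Gb.mw_eq hX hμX]
    have h1 := hlo (List.ofFn w)
    have h2 := hup (List.ofFn w)
    simp only [Gb.rs, if_pos hw, List.length_ofFn] at h1 h2
    refine ⟨?_, h2⟩
    rw [inv_mul_le_iff₀ (by positivity)]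
    exact h1
  · intro n hn
    simp only [Gb.mw_eq hX hμX]
    constructor
    · have h1 := haL n
      rw [← Gb.a_eq hX hμX] at h1
      exact h1
    · have h1 := hHL n
      rw [hent, ← abs_neg]
      have h2 : -Gb.H (μ : Measure (ℕ → A)) n = ∑ w : Fin n → A,
          (μ : Measure (ℕ → A)).real (cyl (List.ofFn w)) *
            Real.log ((μ : Measure (ℕ → A)).real (cyl (List.ofFn w))) := neg_neg _
      rw [← h2]
      convert h1 using 2
      ring
end

section
/- Let (X, σ_X) and (Y, σ_Y) be one-sided subshifts over finite alphabets A and A′, with Y a factor of X via a one-block factor map π : X → Y. Let p ∈ ℕ, a > 0, and φ ∈ D_w(X, p). Define φ^a : L(X) → [0,∞) by φ^a(I) = φ(I)^a, and ψ : L(Y) → [0,∞) by ψ(J) = Σ_{I ∈ L(X), |I| = |J|, πI = J} φ(I). Then φ^a ∈ D_w(X, p) and ψ ∈ D_w(Y, p). Furthermore, if φ ∈ D(X, p), then φ^a ∈ D(X, p) and ψ ∈ D(Y, p). -/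
open MeasureTheory Filter Topology
open scoped Classical ENNReal NNReal

noncomputable section

theorem lang_iff {A : Type} (X : Set (ℕ → A)) (I : List A) :
    Lang X I ↔ ∃ x ∈ X, ∀ (i : ℕ) (h : i < I.length), x i = I[i] := by
  constructor
  · rintro ⟨x, h1, h2⟩
    exact ⟨x, h2, fun i h => h1 ⟨i, h⟩⟩
  · rintro ⟨x, h2, h1⟩
    exact ⟨x, fun i => h1 i i.2, h2⟩

theorem lang_left {A : Type} {X : Set (ℕ → A)} {I J : List A} (h : Lang X (I ++ J)) :
    Lang X I := by
  rw [lang_iff] at h ⊢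
  obtain ⟨x, hx, h⟩ := h
  refine ⟨x, hx, fun i hi => ?_⟩
  rw [h i (by simp; omega), List.getElem_append_left hi]

theorem shift_iter_mem {A : Type} {X : Set (ℕ → A)} (hX : shiftMap '' X ⊆ X) (n : ℕ) :
    ∀ x ∈ X, (fun i => x (n + i)) ∈ X := by
  induction n with
  | zero => intro x hx; simpa using hx
  | succ n ih =>
    intro x hx
    have := ih (shiftMap x) (hX ⟨x, hx, rfl⟩)
    have e : (fun i => x (n + 1 + i)) = (fun i => shiftMap x (n + i)) := by
      funext i
      simp only [shiftMap]
      congr 1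
      omega
    rw [e]
    exact this

theorem lang_right {A : Type} {X : Set (ℕ → A)} (hX : shiftMap '' X ⊆ X) {I J : List A}
    (h : Lang X (I ++ J)) : Lang X J := by
  rw [lang_iff] at h ⊢
  obtain ⟨x, hx, h⟩ := h
  refine ⟨_, shift_iter_mem hX I.length x hx, fun i hi => ?_⟩
  rw [h (I.length + i) (by simp; omega), List.getElem_append_right (by omega)]
  simp

theorem lang_map {A B : Type} {X : Set (ℕ → A)} (π : A → B) {I : List A} (h : Lang X I) :
    Lang (blockMap π '' X) (I.map π) := by
  rw [lang_iff] at h ⊢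
  obtain ⟨x, hx, h⟩ := h
  refine ⟨_, ⟨x, hx, rfl⟩, fun i hi => ?_⟩
  simp only [List.length_map] at hi
  simp [blockMap, h i hi]

theorem lang_lift {A B : Type} {X : Set (ℕ → A)} (π : A → B) {J : List B}
    (h : Lang (blockMap π '' X) J) : ∃ I, Lang X I ∧ I.map π = J := by
  rw [lang_iff] at h
  obtain ⟨_, ⟨x, hx, rfl⟩, h⟩ := h
  refine ⟨List.ofFn (fun i : Fin J.length => x i), ?_, ?_⟩
  · rw [lang_iff]
    exact ⟨x, hx, fun i hi => by simp⟩
  · apply List.ext_getElem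
    · simp
    · intro i h1 h2
      have := h i h2
      simpa [blockMap] using this

/-- the words of `X` above `J` -/
def fib {A B : Type} [Fintype A] (X : Set (ℕ → A)) (π : A → B) (J : List B) :
    Finset (List A) :=
  ((Finset.univ : Finset (Fin J.length → A)).image List.ofFn).filter
    (fun I => Lang X I ∧ I.map π = J)

theorem mem_fib {A B : Type} [Fintype A] (X : Set (ℕ → A)) (π : A → B) (J : List B)
    (I : List A) : I ∈ fib X π J ↔ Lang X I ∧ I.map π = J := by
  simp only [fib, Finset.mem_filter, Finset.mem_image, Finset.mem_univ, true_and,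
    and_iff_right_iff_imp]
  rintro ⟨-, rfl⟩
  refine ⟨fun i => I[i.1]'(by simpa using i.2), ?_⟩
  apply List.ext_getElem <;> simp

theorem psi_eq {A B : Type} [Fintype A] (X : Set (ℕ → A)) (π : A → B) (φ : List A → ℝ)
    (J : List B) : psiProj X π φ J = ∑ I ∈ fib X π J, φ I := by
  rw [fib, Finset.sum_filter, Finset.sum_image (fun _ _ _ _ h => List.ofFn_injective h)]
  rfl

theorem sum_le_of_inj {α β : Type} (s : Finset α) (t : Finset β) (f : α → ℝ) (g : β → ℝ)
    (e : α → β) (he : ∀ x ∈ s, e x ∈ t) (hinj : Set.InjOn e s)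
    (hf : ∀ x ∈ s, f x ≤ g (e x)) (hg : ∀ y ∈ t, 0 ≤ g y) :
    ∑ x ∈ s, f x ≤ ∑ y ∈ t, g y := by
  calc ∑ x ∈ s, f x ≤ ∑ x ∈ s, g (e x) := Finset.sum_le_sum hf
    _ = ∑ y ∈ s.image e, g y := (Finset.sum_image hinj).symm
    _ ≤ ∑ y ∈ t, g y := Finset.sum_le_sum_of_subset_of_nonneg
        (Finset.image_subset_iff.2 he) (fun y hy _ => hg y hy)

/-- common generalization of `Dw` and `Ds` -/
def DP {A : Type} (X : Set (ℕ → A)) (P : ℕ → Prop) (φ : List A → ℝ) : Prop :=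
  (∀ I, Lang X I → 0 ≤ φ I) ∧ (∃ I, Lang X I ∧ I ≠ [] ∧ 0 < φ I) ∧
  ∃ c : ℝ, 0 < c ∧ c ≤ 1 ∧
    (∀ I J : List A, Lang X (I ++ J) → φ (I ++ J) ≤ c⁻¹ * φ I * φ J) ∧
    (∀ I J : List A, Lang X I → Lang X J →
      ∃ K : List A, P K.length ∧ Lang X (I ++ K ++ J) ∧
        c * (φ I * φ J) ≤ φ (I ++ K ++ J))

theorem DP_pow {A : Type} {X : Set (ℕ → A)} (hX : shiftMap '' X ⊆ X) {P : ℕ → Prop}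
    {φ : List A → ℝ} {a : ℝ} (ha : 0 < a) (h : DP X P φ) : DP X P (fun I => φ I ^ a) := by
  obtain ⟨h0, ⟨I₀, hI₀, hne, hpos⟩, c, hc, hc1, h1, h2⟩ := h
  refine ⟨fun I hI => Real.rpow_nonneg (h0 I hI) a,
    ⟨I₀, hI₀, hne, Real.rpow_pos_of_pos hpos a⟩, c ^ a, Real.rpow_pos_of_pos hc a,
    Real.rpow_le_one hc.le hc1 ha.le, fun I J hIJ => ?_, fun I J hI hJ => ?_⟩
  · have hI := h0 _ (lang_left hIJ)
    have hJ := h0 _ (lang_right hX hIJ)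
    simp only
    rw [← Real.inv_rpow hc.le, ← Real.mul_rpow (by positivity) hI,
      ← Real.mul_rpow (by positivity) hJ]
    exact Real.rpow_le_rpow (h0 _ hIJ) (h1 I J hIJ) ha.le
  · obtain ⟨K, hK, hL, hle⟩ := h2 I J hI hJ
    have hI := h0 _ hI
    have hJ := h0 _ hJ
    refine ⟨K, hK, hL, ?_⟩
    simp only
    rw [← Real.mul_rpow hI hJ, ← Real.mul_rpow hc.le (by positivity)]
    exact Real.rpow_le_rpow (by positivity) hle ha.le

theorem DP_psi {A B : Type} [Fintype A] [Fintype B] {X : Set (ℕ → A)}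
    (hX : shiftMap '' X ⊆ X) (π : A → B) {P : ℕ → Prop} (p : ℕ) (hP : ∀ n, P n → n ≤ p)
    {φ : List A → ℝ} (h : DP X P φ) : DP (blockMap π '' X) P (psiProj X π φ) := by
  obtain ⟨h0, ⟨I₀, hI₀, hne, hpos⟩, c, hc, hc1, h1, h2⟩ := h
  have hfin : {M : List B | M.length ≤ p}.Finite := List.finite_length_le B p
  set T : Finset (List B) := hfin.toFinset with hT
  have hT0 : ([] : List B) ∈ T := by simp [hT]
  have hTc : (1 : ℝ) ≤ T.card := by
    exact_mod_cast Finset.card_pos.2 ⟨_, hT0⟩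
  have hψ0 : ∀ J, 0 ≤ psiProj X π φ J := fun J => by
    rw [psi_eq]
    exact Finset.sum_nonneg fun I hI => h0 I ((mem_fib ..).1 hI).1
  refine ⟨fun J _ => hψ0 J, ⟨I₀.map π, lang_map π hI₀, by simpa using hne, ?_⟩,
    c / T.card, by positivity, ?_, fun I J hIJ => ?_, fun I J hI hJ => ?_⟩
  · rw [psi_eq]
    refine lt_of_lt_of_le hpos ?_
    exact Finset.single_le_sum (f := φ)
      (fun I hI => h0 I ((mem_fib ..).1 hI).1) ((mem_fib ..).2 ⟨hI₀, rfl⟩)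
  · rw [div_le_one (by linarith)]
    linarith
  · have key : psiProj X π φ (I ++ J) ≤ c⁻¹ * (psiProj X π φ I * psiProj X π φ J) := by
      rw [psi_eq, psi_eq, psi_eq, Finset.sum_mul_sum, ← Finset.sum_product', Finset.mul_sum]
      refine sum_le_of_inj _ _ _ (fun x : List A × List A => c⁻¹ * (φ x.1 * φ x.2))
        (fun W => (W.take I.length, W.drop I.length)) ?_ ?_ ?_ ?_
      · intro W hW
        obtain ⟨hL, hm⟩ := (mem_fib ..).1 hW
        rw [← List.take_append_drop I.length W] at hL
        simp only [Finset.mem_product, mem_fib]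
        refine ⟨⟨lang_left hL, ?_⟩, lang_right hX hL, ?_⟩
        · rw [List.map_take, hm]; simp
        · rw [List.map_drop, hm]; simp
      · intro W _ W' _ hWW
        simp only [Prod.mk.injEq] at hWW
        rw [← List.take_append_drop I.length W, hWW.1, hWW.2, List.take_append_drop]
      · intro W hW
        obtain ⟨hL, hm⟩ := (mem_fib ..).1 hW
        have := h1 (W.take I.length) (W.drop I.length)
          (by rw [List.take_append_drop]; exact hL)
        rw [List.take_append_drop] at this
        simp only
        linarith
      · intro x hx
        simp only [Finset.mem_product, mem_fib] at hx
        have := h0 _ hx.1.1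
        have := h0 _ hx.2.1
        positivity
    refine key.trans ?_
    rw [mul_assoc]
    refine mul_le_mul_of_nonneg_right ?_ (mul_nonneg (hψ0 I) (hψ0 J))
    exact inv_anti₀ (by positivity) (div_le_self hc.le hTc)
  · have h2' : ∀ x : List A × List A, ∃ K : List A, x ∈ fib X π I ×ˢ fib X π J →
        P K.length ∧ Lang X (x.1 ++ K ++ x.2) ∧
          c * (φ x.1 * φ x.2) ≤ φ (x.1 ++ K ++ x.2) := by
      intro x
      by_cases hx : x ∈ fib X π I ×ˢ fib X π J
      · have hx' := hx
        simp only [Finset.mem_product, mem_fib] at hx'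
        obtain ⟨K, hK⟩ := h2 _ _ hx'.1.1 hx'.2.1
        exact ⟨K, fun _ => hK⟩
      · exact ⟨[], fun h => absurd h hx⟩
    choose K hK using h2'
    set S : Finset (List B) :=
      T.filter (fun M => P M.length ∧ Lang (blockMap π '' X) (I ++ M ++ J)) with hS
    have hmap : ∀ x ∈ fib X π I ×ˢ fib X π J, (K x).map π ∈ S := by
      intro x hx
      obtain ⟨hp, hL, -⟩ := hK x hx
      simp only [Finset.mem_product, mem_fib] at hx
      have := lang_map π hL
      rw [List.map_append, List.map_append, hx.1.2, hx.2.2] at this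
      simp only [hS, hT, Finset.mem_filter, Set.Finite.mem_toFinset, Set.mem_ofPred_eq,
        List.length_map]
      exact ⟨hP _ hp, hp, this⟩
    have hSne : S.Nonempty := by
      obtain ⟨I', hI'⟩ := lang_lift π hI
      obtain ⟨J', hJ'⟩ := lang_lift π hJ
      exact ⟨_, hmap (I', J') (by simp only [Finset.mem_product, mem_fib]; exact ⟨hI', hJ'⟩)⟩
    have key : c * (psiProj X π φ I * psiProj X π φ J) ≤
        ∑ M ∈ S, psiProj X π φ (I ++ M ++ J) := by
      rw [psi_eq, psi_eq, Finset.sum_mul_sum, ← Finset.sum_product', Finset.mul_sum,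
        ← Finset.sum_fiberwise_of_maps_to hmap]
      refine Finset.sum_le_sum fun M _ => ?_
      rw [psi_eq]
      refine sum_le_of_inj _ _ _ φ (fun x => x.1 ++ K x ++ x.2) ?_ ?_ ?_ ?_
      · intro x hx
        obtain ⟨hx, hM⟩ := Finset.mem_filter.1 hx
        have hL := (hK x hx).2.1
        simp only [Finset.mem_product, mem_fib] at hx
        rw [mem_fib, List.map_append, List.map_append, hx.1.2, hx.2.2, hM]
        exact ⟨hL, rfl⟩
      · intro x hx y hy hxy
        have hx := (Finset.mem_filter.1 (Finset.mem_coe.1 hx)).1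
        have hy := (Finset.mem_filter.1 (Finset.mem_coe.1 hy)).1
        simp only [Finset.mem_product, mem_fib] at hx hy
        have l1 : x.1.length = y.1.length := by
          have := congrArg List.length (hx.1.2.trans hy.1.2.symm)
          simpa using this
        have l2 : x.2.length = y.2.length := by
          have := congrArg List.length (hx.2.2.trans hy.2.2.symm)
          simpa using this
        obtain ⟨e1, e2⟩ := List.append_inj' hxy l2
        exact Prod.ext (List.append_inj e1 l1).1 e2
      · intro x hx
        exact (hK x (Finset.mem_filter.1 hx).1).2.2
      · intro W hW
        exact h0 W ((mem_fib ..).1 hW).1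
    have hconst : ∑ _M ∈ S, c / T.card * (psiProj X π φ I * psiProj X π φ J) ≤
        ∑ M ∈ S, psiProj X π φ (I ++ M ++ J) := by
      refine le_trans ?_ key
      rw [Finset.sum_const, nsmul_eq_mul]
      have hST : (S.card : ℝ) ≤ T.card := by
        exact_mod_cast Finset.card_le_card (Finset.filter_subset _ _)
      have hn := mul_nonneg (hψ0 I) (hψ0 J)
      rw [← mul_assoc]
      refine mul_le_mul_of_nonneg_right ?_ hn
      rw [mul_div_assoc', div_le_iff₀ (by linarith)]
      nlinarith
    obtain ⟨M, hM, hle⟩ := Finset.exists_le_of_sum_le hSne hconst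
    have hM' := (Finset.mem_filter.1 hM).2
    exact ⟨M, hM'.1, hM'.2, hle⟩

end

/-- Lemma 5.6 / `lem-3.5`: for `φ ∈ D_w(X,p)` and `a > 0`, `φ^a ∈ D_w(X,p)`
and `ψ(J) = Σ_{πI = J} φ(I)` belongs to `D_w(Y,p)`; if `φ ∈ D(X,p)` then `φ^a ∈ D(X,p)` and
`ψ ∈ D(Y,p)`. -/
theorem weighted_eq_states_stmt_16 {A B : Type}
    [Fintype A] [TopologicalSpace A] [DiscreteTopology A]
    [Fintype B] [TopologicalSpace B] [DiscreteTopology B]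
    (X : Set (ℕ → A)) (Y : Set (ℕ → B)) (hX : IsSubshift X) (hY : IsSubshift Y)
    (π : A → B) (hπ : blockMap π '' X = Y)
    (p : ℕ) (a : ℝ) (ha : 0 < a) (φ : List A → ℝ) (hφ : Dw X p φ) :
    Dw X p (fun I => φ I ^ a) ∧ Dw Y p (psiProj X π φ) ∧
      (Ds X p φ → Ds X p (fun I => φ I ^ a) ∧ Ds Y p (psiProj X π φ)) := by
  subst hπ
  refine ⟨DP_pow (P := fun n => n ≤ p) hX.2.2 ha hφ,
    DP_psi (P := fun n => n ≤ p) hX.2.2 π p (fun _ h => h) hφ, fun hs =>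
    ⟨DP_pow (P := fun n => n = p) hX.2.2 ha hs,
      DP_psi (P := fun n => n = p) hX.2.2 π p (fun _ h => h.le) hs⟩⟩
end
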